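/- arXiv:1601.03296 — 9 statements merged into one kernel-verified Lean document; each statement's English description precedes it below -/
import Mathlib

section
/- For r ∈ (2,3), define I(r) = 4·∫_{r−1}^{2} λ·arccos((λ² + r² − 1)/(2rλ))·( arccos(λ/2) − (λ/2)·√(1 − λ²/4) ) dλ. Then I(r)/(3 − r)³ tends to π/(3√3) as r tends to 3 from below; that is, I(r) = (π/(3√3))·(3 − r)³ + O((3 − r)⁴) as r → 3⁻. -/
open Real Filter Asymptotics Topology intervalIntegral

/-- The integral `I(r)` whose `ρ²` multiple is the expected number of three-hop paths between
two vertices at Euclidean separation `r ∈ [2,3)` in a planar unit disk graph. -/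
noncomputable def threeHopIntegral (r : ℝ) : ℝ :=
  4 * ∫ l in (r - 1)..2,
    l * Real.arccos ((l ^ 2 + r ^ 2 - 1) / (2 * r * l)) *
      (Real.arccos (l / 2) - (l / 2) * Real.sqrt (1 - l ^ 2 / 4))

/-!
Put `ε = 3 - r`. On `[r - 1, 2]` both angles in the integrand are small, and `arccos x` equals the
chord `√(2 * (1 - x))` up to a factor `1 + O(1 - x)`. Hence each of the three factors of the
integrand has, uniformly in `l`, a leading term with *relative* error `O(ε)`: the radius `l` is
close to `2`, the half-angle to `√((l - (r - 1)) / 3)`, and the half lens area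
`θ - sin θ * cos θ ≈ 2 / 3 * θ ^ 3` to `2 / 3 * √(2 - l) ^ 3`. Relative errors multiply and pass
through the integral of the positive product of the leading terms, a Beta integral equal to an exact
multiple of `ε ^ 3`.
-/

/-- Half the angle subtended at a point by the arc of the circle of radius `l` about it that lies
within unit distance of a second point at distance `r`. -/
noncomputable def arcHalfAngle (r l : ℝ) : ℝ :=
  arccos ((l ^ 2 + r ^ 2 - 1) / (2 * r * l))

/-- Half the area of the intersection of two unit disks whose centres are at distance `l`. -/
noncomputable def halfLensArea (l : ℝ) : ℝ :=
  arccos (l / 2) - (l / 2) * √(1 - l ^ 2 / 4)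

lemma continuousOn_arcHalfAngle {r : ℝ} (hr : r ≠ 0) : ContinuousOn (arcHalfAngle r) {0}ᶜ :=
  continuous_arccos.comp_continuousOn <|
    ContinuousOn.div (by fun_prop) (by fun_prop) fun _ hl ↦ mul_ne_zero (by positivity) hl

lemma continuous_halfLensArea : Continuous halfLensArea :=
  (continuous_arccos.comp (by fun_prop)).sub (by fun_prop)

lemma abs_mul_sub_mul_le {R : Type*} [CommRing R] [LinearOrder R] [IsStrictOrderedRing R]
    {x y a b η ξ : R} (hx : |x - a| ≤ η * |a|) (hy : |y - b| ≤ ξ * |b|) :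
    |x * y - a * b| ≤ (η + ξ + η * ξ) * |a * b| := calc
  |x * y - a * b| = |(x - a) * b + a * (y - b) + (x - a) * (y - b)| := by ring_nf
  _ ≤ |x - a| * |b| + |a| * |y - b| + |x - a| * |y - b| := by
    simpa only [abs_mul] using abs_add_three ((x - a) * b) (a * (y - b)) ((x - a) * (y - b))
  _ ≤ η * |a| * |b| + |a| * (ξ * |b|) + η * |a| * (ξ * |b|) := by
    gcongr
    exact (abs_nonneg _).trans hx
  _ = (η + ξ + η * ξ) * |a * b| := by rw [abs_mul]; ring

lemma abs_sqrt_sub_one_le {x : ℝ} (hx : 0 ≤ x) : |√x - 1| ≤ |x - 1| := by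
  have hfactor : x - 1 = (√x - 1) * (√x + 1) := by linear_combination -sq_sqrt hx
  rw [hfactor, abs_mul]
  refine le_mul_of_one_le_right (abs_nonneg _) (le_trans ?_ (le_abs_self _))
  exact le_add_of_nonneg_left (sqrt_nonneg x)

lemma le_sin_add_sin_pow_three {θ : ℝ} (h₀ : 0 ≤ θ) (h₁ : θ ≤ π / 2) :
    θ ≤ sin θ + 2 / 3 * sin θ ^ 3 := by
  have hjordan : θ ≤ π / 2 * sin θ := by
    have h := mul_le_sin h₀ h₁
    rwa [← inv_div, inv_mul_le_iff₀ (by positivity)] at h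
  have hsin : 0 ≤ sin θ := sin_nonneg_of_nonneg_of_le_pi h₀ (by linarith [pi_pos])
  have hcube : θ ^ 3 ≤ 4 * sin θ ^ 3 := calc
    θ ^ 3 ≤ (1.58 * sin θ) ^ 3 := by
      gcongr
      exact hjordan.trans (by gcongr; linarith [pi_lt_d2])
    _ ≤ 4 * sin θ ^ 3 := by
      rw [mul_pow]
      gcongr
      norm_num
  linarith [sin_ge_sub_cube h₀]

lemma abs_sub_sin_mul_cos_sub_le {θ : ℝ} (hθ : |θ| ≤ 1 / 2) :
    |θ - sin θ * cos θ - 2 / 3 * θ ^ 3| ≤ 4 / 25 * |θ| ^ 5 := by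
  have htaylor := sin_bound (x := 2 * θ) (by rw [abs_mul, abs_two]; linarith)
  rw [abs_mul, abs_two, sin_two_mul] at htaylor
  have hdouble : θ - sin θ * cos θ - 2 / 3 * θ ^ 3
      = -(2 * sin θ * cos θ - (2 * θ - (2 * θ) ^ 3 / 6)) / 2 := by ring
  calc |θ - sin θ * cos θ - 2 / 3 * θ ^ 3|
      = |2 * sin θ * cos θ - (2 * θ - (2 * θ) ^ 3 / 6)| / 2 := by
        rw [hdouble, abs_div, abs_neg, abs_two]
    _ ≤ (2 * |θ|) ^ 5 / 100 / 2 := by gcongr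
    _ = 4 / 25 * |θ| ^ 5 := by ring

lemma sin_arccos_div_two {x : ℝ} (h₀ : -1 ≤ x) (h₁ : x ≤ 1) :
    sin (arccos x / 2) = √(2 * (1 - x)) / 2 := by
  have hquarter : (1 - x) / 2 = 2 * (1 - x) / 2 ^ 2 := by ring
  rw [sin_half_eq_sqrt (arccos_nonneg x) (by linarith [arccos_le_pi x, pi_pos]),
    cos_arccos h₀ h₁, hquarter, sqrt_div' _ (by positivity), sqrt_sq zero_le_two]

lemma sqrt_two_mul_one_sub_le_arccos {x : ℝ} (h₀ : -1 ≤ x) (h₁ : x ≤ 1) :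
    √(2 * (1 - x)) ≤ arccos x := by
  have h := sin_le (div_nonneg (arccos_nonneg x) zero_le_two)
  rw [sin_arccos_div_two h₀ h₁] at h
  linarith

lemma arccos_le_sqrt_two_mul_one_sub_mul {x : ℝ} (h₀ : -1 ≤ x) (h₁ : x ≤ 1) :
    arccos x ≤ √(2 * (1 - x)) * (1 + (1 - x) / 3) := by
  have h := le_sin_add_sin_pow_three (div_nonneg (arccos_nonneg x) zero_le_two)
    (by linarith [arccos_le_pi x])
  rw [sin_arccos_div_two h₀ h₁] at h
  have hsq : √(2 * (1 - x)) ^ 2 = 2 * (1 - x) := sq_sqrt (by linarith)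
  linear_combination 2 * h + √(2 * (1 - x)) / 6 * hsq

lemma abs_sub_sin_mul_cos_sub_le_of_le_mul {θ w : ℝ} (hw₀ : 0 ≤ w) (hw₁ : w ≤ 3 / 8)
    (hwθ : w ≤ θ) (hθw : θ ≤ w * (1 + w ^ 2 / 6)) :
    |θ - sin θ * cos θ - 2 / 3 * w ^ 3| ≤ w ^ 2 * (2 / 3 * w ^ 3) := by
  have hθ : 0 ≤ θ := hw₀.trans hwθ
  have hw_sq : w ^ 2 ≤ 1 / 4 := by nlinarith
  have hsegment : |θ - sin θ * cos θ - 2 / 3 * θ ^ 3| ≤ 4 / 25 * θ ^ 5 := by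
    simpa only [abs_of_nonneg hθ] using
      abs_sub_sin_mul_cos_sub_le (θ := θ) (by rw [abs_of_nonneg hθ]; nlinarith)
  have hfifth : θ ^ 5 ≤ 5 / 4 * w ^ 5 := calc
    θ ^ 5 ≤ (25 / 24 * w) ^ 5 := by
      gcongr
      nlinarith
    _ ≤ 5 / 4 * w ^ 5 := by
      rw [mul_pow]
      gcongr
      norm_num
  have hcube : θ ^ 3 ≤ w ^ 3 * (1 + 3 / 5 * w ^ 2) := calc
    θ ^ 3 ≤ (w * (1 + w ^ 2 / 6)) ^ 3 := by gcongr
    _ = w ^ 3 * (1 + w ^ 2 / 6) ^ 3 := by ring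
    _ ≤ w ^ 3 * (1 + 3 / 5 * w ^ 2) := by
      gcongr
      nlinarith [mul_nonneg (sq_nonneg w) (sub_nonneg.2 hw_sq)]
  have hcube_sub : |2 / 3 * θ ^ 3 - 2 / 3 * w ^ 3| ≤ 2 / 5 * w ^ 5 := by
    rw [abs_of_nonneg (by linarith [pow_le_pow_left₀ hw₀ hwθ 3])]
    linarith
  calc |θ - sin θ * cos θ - 2 / 3 * w ^ 3|
      ≤ |θ - sin θ * cos θ - 2 / 3 * θ ^ 3| + |2 / 3 * θ ^ 3 - 2 / 3 * w ^ 3| :=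
        abs_sub_le _ _ _
    _ ≤ w ^ 2 * (2 / 3 * w ^ 3) := by linarith [pow_nonneg hw₀ 5]

lemma halfLensArea_eq_sub_sin_mul_cos {l : ℝ} (h₀ : -2 ≤ l) (h₂ : l ≤ 2) :
    halfLensArea l = arccos (l / 2) - sin (arccos (l / 2)) * cos (arccos (l / 2)) := by
  rw [halfLensArea, sin_arccos, cos_arccos (by linarith) (by linarith),
    show 1 - l ^ 2 / 4 = 1 - (l / 2) ^ 2 by ring]
  ring

lemma abs_halfLensArea_sub_le {l : ℝ} (h₀ : 15 / 8 ≤ l) (h₂ : l ≤ 2) :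
    |halfLensArea l - 2 / 3 * √(2 - l) ^ 3| ≤ (2 - l) * (2 / 3 * √(2 - l) ^ 3) := by
  have hw_sq : √(2 - l) ^ 2 = 2 - l := sq_sqrt (by linarith)
  have hθ_ge := sqrt_two_mul_one_sub_le_arccos (x := l / 2) (by linarith) (by linarith)
  have hθ_le := arccos_le_sqrt_two_mul_one_sub_mul (x := l / 2) (by linarith) (by linarith)
  rw [show 2 * (1 - l / 2) = 2 - l by ring] at hθ_ge hθ_le
  rw [show (1 - l / 2) / 3 = √(2 - l) ^ 2 / 6 by rw [hw_sq]; ring] at hθ_le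
  have h := abs_sub_sin_mul_cos_sub_le_of_le_mul (sqrt_nonneg (2 - l))
    (sqrt_le_iff.2 ⟨by norm_num, by linarith⟩) hθ_ge hθ_le
  rwa [← halfLensArea_eq_sub_sin_mul_cos (by linarith) h₂, hw_sq] at h

-- By the law of cosines both sides are the squared chord of the angle opposite the unit side in
-- the triangle with sides `r`, `l`, `1`.
lemma two_mul_one_sub_law_of_cosines {r l : ℝ} (hr : r ≠ 0) (hl : l ≠ 0) :
    2 * (1 - (l ^ 2 + r ^ 2 - 1) / (2 * r * l)) = (1 - (r - l) ^ 2) / (r * l) := by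
  field_simp
  ring

lemma abs_sqrt_chord_sub_le {r l : ℝ} (hr₂ : 2 ≤ r) (hr₃ : r ≤ 3) (h₁ : r - 1 ≤ l) (h₂ : l ≤ 2) :
    |√((1 - (r - l) ^ 2) / (r * l)) - √((l - (r - 1)) / 3)|
      ≤ 5 / 2 * (3 - r) * √((l - (r - 1)) / 3) := by
  have hrl : 2 ≤ r * l := by nlinarith
  set c := 3 * (1 + (r - l)) / (r * l) with hc
  have hc_nonneg : 0 ≤ c := div_nonneg (by linarith) (by linarith)
  have hc_sub : |c - 1| ≤ 5 / 2 * (3 - r) := by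
    rw [hc, div_sub_one (by positivity), abs_div, abs_of_pos (by positivity : 0 < r * l),
      div_le_iff₀ (by positivity), abs_le]
    constructor <;> nlinarith
  have hsplit : (1 - (r - l) ^ 2) / (r * l) = (l - (r - 1)) / 3 * c := by
    rw [hc]
    field_simp
    ring
  have hfactor : √((1 - (r - l) ^ 2) / (r * l)) - √((l - (r - 1)) / 3)
      = (√c - 1) * √((l - (r - 1)) / 3) := by
    rw [hsplit, sqrt_mul (by linarith)]
    ring
  rw [hfactor, abs_mul, abs_of_nonneg (sqrt_nonneg ((l - (r - 1)) / 3))]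
  gcongr
  exact (abs_sqrt_sub_one_le hc_nonneg).trans hc_sub

lemma abs_arcHalfAngle_sub_le {r l : ℝ} (hr₂ : 23 / 8 ≤ r) (hr₃ : r ≤ 3) (h₁ : r - 1 ≤ l)
    (h₂ : l ≤ 2) :
    |arcHalfAngle r l - √((l - (r - 1)) / 3)| ≤ 3 * (3 - r) * √((l - (r - 1)) / 3) := by
  have hchord := abs_sqrt_chord_sub_le (by linarith) hr₃ h₁ h₂
  have hcos := two_mul_one_sub_law_of_cosines (r := r) (l := l) (by linarith) (by linarith)
  have hrl : 5 ≤ r * l := by nlinarith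
  have hnonneg : 0 ≤ (1 - (r - l) ^ 2) / (r * l) := div_nonneg (by nlinarith) (by linarith)
  have hle : (1 - (r - l) ^ 2) / (r * l) ≤ 2 / 5 * (3 - r) := by
    rw [div_le_iff₀ (by linarith)]
    nlinarith
  rw [← hcos] at hchord hnonneg hle
  rw [arcHalfAngle]
  set x := (l ^ 2 + r ^ 2 - 1) / (2 * r * l)
  have ha : 0 ≤ √((l - (r - 1)) / 3) := sqrt_nonneg _
  set a := √((l - (r - 1)) / 3)
  have harccos_ge := sqrt_two_mul_one_sub_le_arccos (x := x) (by linarith) (by linarith)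
  have harccos_le := arccos_le_sqrt_two_mul_one_sub_mul (x := x) (by linarith) (by linarith)
  have hchord_le : √(2 * (1 - x)) ≤ 2 * a := by nlinarith [(abs_le.1 hchord).2]
  have harccos_sub : |arccos x - √(2 * (1 - x))| ≤ 1 / 2 * (3 - r) * a := by
    rw [abs_of_nonneg (sub_nonneg.2 harccos_ge)]
    calc arccos x - √(2 * (1 - x)) ≤ √(2 * (1 - x)) * ((1 - x) / 3) := by linarith
      _ ≤ 2 * a * ((3 - r) / 4) :=
        mul_le_mul hchord_le (by linarith) (by linarith) (by linarith)
      _ = 1 / 2 * (3 - r) * a := by ring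
  calc |arccos x - a| ≤ |arccos x - √(2 * (1 - x))| + |√(2 * (1 - x)) - a| := abs_sub_le _ _ _
    _ ≤ 1 / 2 * (3 - r) * a + 5 / 2 * (3 - r) * a := add_le_add harccos_sub hchord
    _ = 3 * (3 - r) * a := by ring

lemma abs_threeHop_integrand_sub_le {r l : ℝ} (hr₂ : 23 / 8 ≤ r) (hr₃ : r ≤ 3) (h₁ : r - 1 ≤ l)
    (h₂ : l ≤ 2) :
    |l * arcHalfAngle r l * halfLensArea l
        - 4 / (3 * √3) * (√(l - (r - 1)) * √(2 - l) ^ 3)|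
      ≤ 6 * (3 - r) * (4 / (3 * √3) * (√(l - (r - 1)) * √(2 - l) ^ 3)) := by
  have hleading : 2 * √((l - (r - 1)) / 3) * (2 / 3 * √(2 - l) ^ 3)
      = 4 / (3 * √3) * (√(l - (r - 1)) * √(2 - l) ^ 3) := by
    rw [sqrt_div' _ zero_le_three]
    field_simp
    ring
  have hradius : |l - 2| ≤ (3 - r) / 2 * |2| := by
    rw [abs_two, abs_le]
    constructor <;> linarith
  have hangle : |arcHalfAngle r l - √((l - (r - 1)) / 3)|
      ≤ 3 * (3 - r) * |√((l - (r - 1)) / 3)| := by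
    rw [abs_of_nonneg (sqrt_nonneg ((l - (r - 1)) / 3))]
    exact abs_arcHalfAngle_sub_le hr₂ hr₃ h₁ h₂
  have hlens : |halfLensArea l - 2 / 3 * √(2 - l) ^ 3| ≤ (3 - r) * |2 / 3 * √(2 - l) ^ 3| := by
    rw [abs_of_nonneg (by positivity : 0 ≤ 2 / 3 * √(2 - l) ^ 3)]
    exact (abs_halfLensArea_sub_le (by linarith) h₂).trans
      (mul_le_mul_of_nonneg_right (by linarith) (by positivity))
  have h := abs_mul_sub_mul_le (abs_mul_sub_mul_le hradius hangle) hlens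
  rw [hleading, abs_of_nonneg (by positivity :
    0 ≤ 4 / (3 * √3) * (√(l - (r - 1)) * √(2 - l) ^ 3))] at h
  refine h.trans ?_
  have hε_sq : (3 - r) ^ 2 ≤ 1 / 8 * (3 - r) := by nlinarith
  have hε_cube : (3 - r) ^ 3 ≤ 1 / 8 * (3 - r) ^ 2 := by nlinarith [sq_nonneg (3 - r)]
  gcongr
  linarith

lemma integral_eq_zero_of_odd {E : Type*} [NormedAddCommGroup E] [NormedSpace ℝ E] {f : ℝ → E}
    (hf : f.Odd) (a : ℝ) : ∫ x in -a..a, f x = 0 := by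
  have h := integral_comp_neg (a := -a) (b := a) f
  simp only [hf _, integral_neg, neg_neg] at h
  have : IsAddTorsionFree E := .of_isTorsionFree ℝ E
  exact self_eq_neg.1 h.symm

lemma integral_sqrt_one_add_mul_sqrt_one_sub_pow_three :
    ∫ x in (-1 : ℝ)..1, √(1 + x) * √(1 - x) ^ 3 = π / 2 := by
  have hcongr : ∫ x in (-1 : ℝ)..1, √(1 + x) * √(1 - x) ^ 3
      = ∫ x in (-1 : ℝ)..1, (√(1 - x ^ 2) - x * √(1 - x ^ 2)) := by
    refine integral_congr fun x hx ↦ ?_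
    rw [Set.uIcc_of_le (by norm_num)] at hx
    have hprod : √(1 - x ^ 2) = √(1 + x) * √(1 - x) := by
      rw [← sqrt_mul (by linarith [hx.1])]
      ring_nf
    have hsq : √(1 - x) ^ 2 = 1 - x := sq_sqrt (by linarith [hx.2])
    simp only [hprod]
    linear_combination √(1 + x) * √(1 - x) * hsq
  have hodd : Function.Odd fun x : ℝ ↦ x * √(1 - x ^ 2) := fun x ↦ by
    simp only [neg_sq, neg_mul]
  rw [hcongr, integral_sub, integral_sqrt_one_sub_sq, integral_eq_zero_of_odd hodd, sub_zero] <;>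
    exact Continuous.intervalIntegrable (by fun_prop) _ _

lemma integral_sqrt_sub_mul_sqrt_sub_pow_three {a b : ℝ} (hab : a ≤ b) :
    ∫ x in a..b, √(x - a) * √(b - x) ^ 3 = π / 16 * (b - a) ^ 3 := by
  set k := (b - a) / 2 with hk
  have hk₀ : 0 ≤ k := by linarith
  have hscale (x : ℝ) : √(k * x + (a + b) / 2 - a) * √(b - (k * x + (a + b) / 2)) ^ 3
      = k ^ 2 * (√(1 + x) * √(1 - x) ^ 3) := by
    have hleft : k * x + (a + b) / 2 - a = k * (1 + x) := by rw [hk]; ring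
    have hright : b - (k * x + (a + b) / 2) = k * (1 - x) := by rw [hk]; ring
    rw [hleft, hright, sqrt_mul hk₀, sqrt_mul hk₀]
    linear_combination (√k ^ 2 + k) * (√(1 + x) * √(1 - x) ^ 3) * sq_sqrt hk₀
  have hsubst := mul_integral_comp_mul_add (a := -1) (b := 1)
    (f := fun x ↦ √(x - a) * √(b - x) ^ 3) k ((a + b) / 2)
  rw [show k * -1 + (a + b) / 2 = a by rw [hk]; ring,
    show k * 1 + (a + b) / 2 = b by rw [hk]; ring] at hsubst
  simp only [hscale, integral_const_mul,
    integral_sqrt_one_add_mul_sqrt_one_sub_pow_three] at hsubst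
  rw [← hsubst, hk]
  ring

lemma intervalIntegrable_threeHop_integrand {r : ℝ} (hr : 1 < r) :
    IntervalIntegrable (fun l ↦ l * arcHalfAngle r l * halfLensArea l) MeasureTheory.volume
      (r - 1) 2 := by
  refine ContinuousOn.intervalIntegrable ?_
  refine (continuousOn_id.mul ?_).mul continuous_halfLensArea.continuousOn
  refine (continuousOn_arcHalfAngle (by linarith)).mono fun l hl ↦ ?_
  exact ((lt_min (sub_pos.2 hr) two_pos).trans_le hl.1).ne'

lemma abs_threeHopIntegral_sub_le {r : ℝ} (hr₂ : 23 / 8 ≤ r) (hr₃ : r ≤ 3) :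
    |threeHopIntegral r - π / (3 * √3) * (3 - r) ^ 3|
      ≤ 6 * (3 - r) * (π / (3 * √3) * (3 - r) ^ 3) := by
  have hr₁ : r - 1 ≤ 2 := by linarith
  let leading (l : ℝ) : ℝ := 4 / (3 * √3) * (√(l - (r - 1)) * √(2 - l) ^ 3)
  have hleading : 4 * ∫ l in (r - 1)..2, leading l = π / (3 * √3) * (3 - r) ^ 3 := by
    rw [integral_const_mul, integral_sqrt_sub_mul_sqrt_sub_pow_three hr₁]
    ring
  have hleading_int : IntervalIntegrable leading MeasureTheory.volume (r - 1) 2 :=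
    Continuous.intervalIntegrable (by fun_prop) _ _
  have hbound : |∫ l in (r - 1)..2, (l * arcHalfAngle r l * halfLensArea l - leading l)|
      ≤ ∫ l in (r - 1)..2, 6 * (3 - r) * leading l :=
    norm_integral_le_of_norm_le (f := fun l ↦ l * arcHalfAngle r l * halfLensArea l - leading l)
      hr₁ (.of_forall fun l hl ↦ abs_threeHop_integrand_sub_le hr₂ hr₃ hl.1.le hl.2)
      (hleading_int.const_mul (6 * (3 - r)))
  calc |threeHopIntegral r - π / (3 * √3) * (3 - r) ^ 3|
      = 4 * |∫ l in (r - 1)..2, (l * arcHalfAngle r l * halfLensArea l - leading l)| := by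
        rw [integral_sub (intervalIntegrable_threeHop_integrand (by linarith)) hleading_int,
          ← hleading, threeHopIntegral, ← mul_sub, abs_mul, abs_of_pos four_pos]
        rfl
    _ ≤ 4 * ∫ l in (r - 1)..2, 6 * (3 - r) * leading l := by gcongr
    _ = 6 * (3 - r) * (π / (3 * √3) * (3 - r) ^ 3) := by
        rw [integral_const_mul, ← hleading]
        ring

lemma tendsto_div_of_isBigO_sub {α 𝕜 : Type*} [NormedField 𝕜] {F : Filter α} {f g h : α → 𝕜}
    {c : 𝕜} (hg : ∀ᶠ x in F, g x ≠ 0) (hh : Tendsto h F (𝓝 0))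
    (hfg : (fun x ↦ f x - c * g x) =O[F] fun x ↦ h x * g x) :
    Tendsto (fun x ↦ f x / g x) F (𝓝 c) := by
  rw [← tendsto_sub_nhds_zero_iff]
  refine IsBigO.trans_tendsto ?_ hh
  refine (hfg.mul (isBigO_refl (fun x ↦ (g x)⁻¹) F)).congr' ?_ ?_ <;>
    filter_upwards [hg] with x hx <;> field_simp

/-- `I(r)/(3 − r)³ → π/(3√3)` as `r → 3⁻`; that is,
`I(r) = (π/(3√3))·(3 − r)³ + O((3 − r)⁴)` as `r → 3⁻`. -/
theorem threeHopIntegral_asymptotics :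
    Tendsto (fun r : ℝ => threeHopIntegral r / (3 - r) ^ 3) (𝓝[<] 3)
      (𝓝 (π / (3 * Real.sqrt 3))) ∧
    (fun r : ℝ => threeHopIntegral r - π / (3 * Real.sqrt 3) * (3 - r) ^ 3)
      =O[𝓝[<] 3] (fun r : ℝ => (3 - r) ^ 4) := by
  have hO : (fun r : ℝ ↦ threeHopIntegral r - π / (3 * √3) * (3 - r) ^ 3)
      =O[𝓝[<] 3] fun r ↦ (3 - r) ^ 4 := by
    refine .of_bound (6 * (π / (3 * √3))) ?_
    filter_upwards [Ioo_mem_nhdsLT (by norm_num : (23 / 8 : ℝ) < 3)] with r hr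
    rw [norm_eq_abs, norm_of_nonneg (by positivity)]
    exact (abs_threeHopIntegral_sub_le hr.1.le hr.2.le).trans_eq (by ring)
  refine ⟨tendsto_div_of_isBigO_sub (h := fun r ↦ 3 - r) ?_ ?_ ?_, hO⟩
  · filter_upwards [self_mem_nhdsWithin] with r hr
    exact pow_ne_zero 3 (sub_ne_zero.2 (ne_of_gt hr))
  · refine tendsto_nhdsWithin_of_tendsto_nhds ?_
    exact Continuous.tendsto' (by fun_prop) 3 0 (sub_self 3)
  · simpa only [← pow_succ'] using hO
end

section
/- For r ∈ [2,3], the following exact integral identity holds: ∫_{r−1}^{2} ( (π/12)(4 + λ)(2 − λ)² ) · ( 2πλ²·(1 − (r² + λ² − 1)/(2rλ)) ) dλ = (π²/1260)·( (r + 3)(r + 9) − 6/r )·(3 − r)⁴. -/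
open Real intervalIntegral

/-!
Put `u = 2 - λ` and `v = λ - (r - 1)`. Since `1 - (r² + λ² - 1) / (2rλ) = (1 - (r - λ)²) / (2rλ)`
and `1 - (r - λ)² = v (2 - v)`, the integrand is `π² / (12 r)` times the polynomial
`(6 - u) (2 - u) u² · v (2 - v)`. Expanding in monomials `v ^ m * u ^ n` reduces the integral to
Euler beta integrals over `[r - 1, 2]`, an interval of length `3 - r`; the lowest monomial
`v * u ^ 2` accounts for the factor `(3 - r) ^ 4`.
-/

open scoped Nat

theorem integral_sub_pow_mul_sub_pow_succ (a b : ℝ) (m n : ℕ) :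
    ∫ x in a..b, (x - a) ^ m * (b - x) ^ (n + 1) =
      (n + 1) / (m + 1) * ∫ x in a..b, (x - a) ^ (m + 1) * (b - x) ^ n := by
  have hasDerivAt_left (x : ℝ) :
      HasDerivAt (fun x ↦ (x - a) ^ (m + 1)) ((m + 1) * (x - a) ^ m) x := by
    simpa using ((hasDerivAt_id' x).sub_const a).fun_pow (m + 1)
  have hasDerivAt_right (x : ℝ) :
      HasDerivAt (fun x ↦ (b - x) ^ (n + 1)) (-((n + 1) * (b - x) ^ n)) x := by
    simpa using ((hasDerivAt_id' x).const_sub b).fun_pow (n + 1)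
  have by_parts := integral_mul_deriv_eq_deriv_mul (a := a) (b := b)
    (fun x _ ↦ hasDerivAt_right x) (fun x _ ↦ hasDerivAt_left x)
    (Continuous.intervalIntegrable (by fun_prop) _ _)
    (Continuous.intervalIntegrable (by fun_prop) _ _)
  have scaled : (m + 1) * ∫ x in a..b, (x - a) ^ m * (b - x) ^ (n + 1) =
      (n + 1) * ∫ x in a..b, (x - a) ^ (m + 1) * (b - x) ^ n := by
    simpa [mul_assoc, mul_comm, mul_left_comm, ← integral_const_mul] using by_parts
  field_simp
  linear_combination scaled

theorem integral_sub_pow_mul_sub_pow (a b : ℝ) (m n : ℕ) :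
    ∫ x in a..b, (x - a) ^ m * (b - x) ^ n = m ! * n ! / (m + n + 1)! * (b - a) ^ (m + n + 1) := by
  induction n generalizing m with
  | zero =>
    simp only [pow_zero, mul_one, integral_comp_sub_right (fun x ↦ x ^ m), sub_self, integral_pow,
      zero_pow m.succ_ne_zero, sub_zero, Nat.factorial_zero, Nat.cast_one, add_zero,
      Nat.factorial_succ, Nat.cast_mul, Nat.cast_add]
    field_simp
  | succ n ih =>
    rw [integral_sub_pow_mul_sub_pow_succ, ih, show m + 1 + n + 1 = m + (n + 1) + 1 by ring]
    push_cast [Nat.factorial_succ m, Nat.factorial_succ n]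
    field_simp

theorem sphericalCap_area_eq (R : ℝ) {r : ℝ} (hr : r ≠ 0) (l : ℝ) :
    2 * π * l ^ 2 * (1 - (r ^ 2 + l ^ 2 - R ^ 2) / (2 * r * l)) =
      π / r * (l * (R ^ 2 - (r - l) ^ 2)) := by
  rcases eq_or_ne l 0 with rfl | hl
  · simp
  · field_simp
    ring

theorem integral_threeHop_polynomial (r : ℝ) :
    ∫ l in (r - 1)..2, (4 + l) * (2 - l) ^ 2 * (l * (1 - (r - l) ^ 2)) =
      (r * ((r + 3) * (r + 9)) - 6) / 105 * (3 - r) ^ 4 := by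
  have beta_expansion (l : ℝ) : (4 + l) * (2 - l) ^ 2 * (l * (1 - (r - l) ^ 2)) =
      24 * ((l - (r - 1)) ^ 1 * (2 - l) ^ 2) - 12 * ((l - (r - 1)) ^ 2 * (2 - l) ^ 2)
        - 16 * ((l - (r - 1)) ^ 1 * (2 - l) ^ 3) + 8 * ((l - (r - 1)) ^ 2 * (2 - l) ^ 3)
        + 2 * ((l - (r - 1)) ^ 1 * (2 - l) ^ 4) - (l - (r - 1)) ^ 2 * (2 - l) ^ 4 := by
    ring
  simp (disch := exact Continuous.intervalIntegrable (by fun_prop) _ _) only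
    [beta_expansion, integral_add, integral_sub, integral_const_mul, integral_sub_pow_mul_sub_pow]
  norm_num [Nat.factorial]
  ring

theorem threeHop_integral_3d_general {r : ℝ} (hr : r ≠ 0) :
    (∫ l in (r - 1)..2,
        (π / 12 * (4 + l) * (2 - l) ^ 2) *
          (2 * π * l ^ 2 * (1 - (r ^ 2 + l ^ 2 - 1) / (2 * r * l)))) =
      π ^ 2 / 1260 * ((r + 3) * (r + 9) - 6 / r) * (3 - r) ^ 4 := by
  have integrand_eq (l : ℝ) : (π / 12 * (4 + l) * (2 - l) ^ 2) *
        (2 * π * l ^ 2 * (1 - (r ^ 2 + l ^ 2 - 1) / (2 * r * l))) =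
      π ^ 2 / (12 * r) * ((4 + l) * (2 - l) ^ 2 * (l * (1 - (r - l) ^ 2))) := by
    linear_combination π / 12 * (4 + l) * (2 - l) ^ 2 * sphericalCap_area_eq 1 hr l
  simp_rw [integrand_eq]
  rw [integral_const_mul, integral_threeHop_polynomial]
  field_simp
  ring

/-- For `r ∈ [2,3]`, the exact identity
`∫_{r−1}^{2} ((π/12)(4+λ)(2−λ)²)·(2πλ²(1 − (r²+λ²−1)/(2rλ))) dλ
  = (π²/1260)·((r+3)(r+9) − 6/r)·(3−r)⁴` holds. -/
theorem threeHop_integral_3d (r : ℝ) (hr : r ∈ Set.Icc (2 : ℝ) 3) :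
    (∫ l in (r - 1)..2,
        (π / 12 * (4 + l) * (2 - l) ^ 2) *
          (2 * π * l ^ 2 * (1 - (r ^ 2 + l ^ 2 - 1) / (2 * r * l)))) =
      π ^ 2 / 1260 * ((r + 3) * (r + 9) - 6 / r) * (3 - r) ^ 4 :=
  threeHop_integral_3d_general (two_pos.trans_le hr.1).ne'
end

section
/- For r ∈ [3,4], with S(a,λ) = 2πλ²·(1 − (a² + λ² − 1)/(2aλ)) and V(λ) = (π/12)(4 + λ)(2 − λ)², the following exact double-integral identity holds: ∫_{r−1}^{3} S(r,λ₁) · ( ∫_{λ₁−1}^{2} V(λ₂)·S(λ₁,λ₂) dλ₂ ) dλ₁ = (π³/453600)·( (2 + r)(8 + r)(14 + r) − 144/r )·(4 − r)⁶. -/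
/-!
Let `P n r` be the expected number of paths through `n` relays, at unit density, between points at
distance `r = n + 1 - t`, where `t ∈ [0, 1]` is the slack in the longest such path.  Since
`S a l = π / a * (l * (1 - (a - l) ^ 2))`, each further relay convolves `r * P n r`, as a function
of `t`, with `π * w * (2 - w)` on `[0, t]`.  Let `D` denote integration from `0`, so that
`D ^ (m + 1)` is convolution with `w ^ m / m!`; then the new factor is `2 * π * D ^ 2 * (1 - D)`.
Starting from `r * P 0 r = 1 - t`, the kernel of `D * (1 - D)`, one finds that `r * P n r` is the
kernel of `(2 * π) ^ n * D ^ (2 * n + 1) * (1 - D) ^ (n + 1)`.  The lens volume is the case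
`n = 1`, and the four-hop integral is the case `n = 3`.
-/

open Real intervalIntegral

/-- The surface area `S(a,λ)` of the spherical cap cut from the sphere of radius `λ` about a
point by the unit ball about a second point at distance `a` from the first. -/
noncomputable def capArea (a l : ℝ) : ℝ :=
  2 * π * l ^ 2 * (1 - (a ^ 2 + l ^ 2 - 1) / (2 * a * l))

/-- The volume `V(λ)` of the intersection of two unit balls in `ℝ³` whose centres are at
distance `λ`. -/
noncomputable def lensVol3 (l : ℝ) : ℝ :=
  π / 12 * (4 + l) * (2 - l) ^ 2

open scoped Nat

theorem hasDerivAt_pow_succ_div_factorial (n : ℕ) (x : ℝ) :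
    HasDerivAt (fun x : ℝ ↦ x ^ (n + 1) / (n + 1)!) (x ^ n / n !) x := by
  refine ((hasDerivAt_pow (n + 1) x).div_const _).congr_deriv ?_
  rw [Nat.factorial_succ]
  push_cast
  field_simp

theorem integral_sub_pow_div_factorial_mul_pow_div_factorial (m n : ℕ) (t : ℝ) :
    ∫ s in (0 : ℝ)..t, (t - s) ^ m / m ! * (s ^ n / n !) =
      t ^ (m + n + 1) / (m + n + 1)! := by
  induction m generalizing n with
  | zero =>
    have := integral_eq_sub_of_hasDerivAt (fun s _ ↦ hasDerivAt_pow_succ_div_factorial n s)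
      (Continuous.intervalIntegrable (by fun_prop) 0 t)
    simpa using this
  | succ m ih =>
    have deriv_left (s : ℝ) :
        HasDerivAt (fun s ↦ (t - s) ^ (m + 1) / (m + 1)!) (-((t - s) ^ m / m !)) s :=
      (hasDerivAt_pow_succ_div_factorial m (t - s)).comp_const_sub t s
    rw [integral_mul_deriv_eq_deriv_mul (fun s _ ↦ deriv_left s)
      (fun s _ ↦ hasDerivAt_pow_succ_div_factorial n s)
      (Continuous.intervalIntegrable (by fun_prop) 0 t)
      (Continuous.intervalIntegrable (by fun_prop) 0 t)]
    simp only [neg_mul, integral_neg, ih, sub_self]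
    simp [add_assoc, add_comm 1]

/-- The polynomial `(1 - D) ^ k (t ^ m / m!)`, where `D` is integration from `0` and hence
raises the degree `m` of a divided power `t ^ m / m!` by one. -/
noncomputable def dividedPowDiff : ℕ → ℕ → ℝ → ℝ
  | 0, m, t => t ^ m / m !
  | k + 1, m, t => dividedPowDiff k m t - dividedPowDiff k (m + 1) t

theorem continuous_dividedPowDiff (k m : ℕ) : Continuous (dividedPowDiff k m) := by
  induction k generalizing m with
  | zero => exact (continuous_pow m).div_const _
  | succ k ih => exact (ih m).sub (ih (m + 1))

theorem integral_mul_two_sub_mul_dividedPowDiff (k m : ℕ) (t : ℝ) :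
    ∫ s in (0 : ℝ)..t, (t - s) * (2 - (t - s)) * dividedPowDiff k m s =
      2 * dividedPowDiff (k + 1) (m + 2) t := by
  induction k generalizing m with
  | zero =>
    have kernel_eq (s : ℝ) : (t - s) * (2 - (t - s)) * dividedPowDiff 0 m s =
        2 * ((t - s) ^ 1 / 1! * (s ^ m / m !)) - 2 * ((t - s) ^ 2 / 2! * (s ^ m / m !)) := by
      simp only [dividedPowDiff, Nat.factorial]
      push_cast
      ring
    simp_rw [kernel_eq]
    rw [integral_sub (Continuous.intervalIntegrable (by fun_prop) 0 t)
      (Continuous.intervalIntegrable (by fun_prop) 0 t), integral_const_mul, integral_const_mul,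
      integral_sub_pow_div_factorial_mul_pow_div_factorial,
      integral_sub_pow_div_factorial_mul_pow_div_factorial]
    simp only [dividedPowDiff, mul_sub]
    ring_nf
  | succ k ih =>
    have integrable (j : ℕ) : IntervalIntegrable
        (fun s ↦ (t - s) * (2 - (t - s)) * dividedPowDiff k j s) MeasureTheory.volume 0 t := by
      have := continuous_dividedPowDiff k j
      exact Continuous.intervalIntegrable (by fun_prop) 0 t
    simp_rw [dividedPowDiff, mul_sub (_ * _)]
    rw [integral_sub (integrable m) (integrable (m + 1)), ih, ih, ← mul_sub]
    rfl

/-- The expected number, at unit density, of paths through `n` relays between two points at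
distance `r` in the three-dimensional unit disk graph.  This reading is valid for `0 < r` in
`[n, n + 1]`; the definition extends the formula to all `r ≠ 0`. -/
noncomputable def relayPathDensity (n : ℕ) (r : ℝ) : ℝ :=
  (2 * π) ^ n / r * dividedPowDiff (n + 1) (2 * n) (n + 1 - r)

theorem capArea_eq_div_mul {a : ℝ} (ha : a ≠ 0) (l : ℝ) :
    capArea a l = π / a * (l * (1 - (a - l) ^ 2)) := by
  unfold capArea
  rcases eq_or_ne l 0 with rfl | hl
  · simp
  · field_simp
    ring

theorem integral_capArea_mul {a : ℝ} (ha : a ≠ 0) (b : ℝ) (f : ℝ → ℝ) :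
    ∫ l in (a - 1)..b, capArea a l * f l =
      π / a * ∫ s in (0 : ℝ)..(b + 1 - a),
        (b + 1 - a - s) * (2 - (b + 1 - a - s)) * ((b - s) * f (b - s)) := by
  have integrand_eq (l : ℝ) :
      capArea a l * f l = π / a * ((1 - (a - l) ^ 2) * (l * f l)) := by
    rw [capArea_eq_div_mul ha]
    ring
  simp_rw [integrand_eq]
  rw [integral_const_mul]
  congr 1
  calc ∫ l in (a - 1)..b, (1 - (a - l) ^ 2) * (l * f l)
      = ∫ s in (0 : ℝ)..(b + 1 - a), (1 - (a - (b - s)) ^ 2) * ((b - s) * f (b - s)) := by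
        rw [integral_comp_sub_left (fun l ↦ (1 - (a - l) ^ 2) * (l * f l)) b]
        ring_nf
    _ = _ := by
        congr with s
        ring

theorem integral_capArea_mul_of_eq_relayPathDensity {n : ℕ} {f : ℝ → ℝ}
    (hf : ∀ l ≠ 0, f l = relayPathDensity n l) {a : ℝ} (ha : a ≠ 0) :
    ∫ l in (a - 1)..(n + 1), capArea a l * f l = relayPathDensity (n + 1) a := by
  have profile_eq {s : ℝ} (hs : s ≠ n + 1) : (n + 1 - s) * f (n + 1 - s) =
      (2 * π) ^ n * dividedPowDiff (n + 1) (2 * n) s := by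
    have distance_ne_zero : n + 1 - s ≠ 0 := sub_ne_zero.mpr hs.symm
    rw [hf _ distance_ne_zero, relayPathDensity, sub_sub_cancel]
    field_simp
  calc ∫ l in (a - 1)..(n + 1), capArea a l * f l
      = π / a * ∫ s in (0 : ℝ)..(n + 1 + 1 - a), (2 * π) ^ n *
          ((n + 1 + 1 - a - s) * (2 - (n + 1 + 1 - a - s)) *
            dividedPowDiff (n + 1) (2 * n) s) := by
        rw [integral_capArea_mul ha]
        congr 1
        refine integral_congr_ae ?_
        filter_upwards [MeasureTheory.Measure.ae_ne MeasureTheory.volume (n + 1 : ℝ)] with s hs _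
        rw [profile_eq hs]
        ring
    _ = π / a * ((2 * π) ^ n *
          (2 * dividedPowDiff (n + 2) (2 * n + 2) (n + 1 + 1 - a))) := by
        rw [integral_const_mul, integral_mul_two_sub_mul_dividedPowDiff]
    _ = relayPathDensity (n + 1) a := by
        rw [relayPathDensity, mul_add_one, Nat.cast_add_one]
        ring

theorem lensVol3_eq_relayPathDensity {l : ℝ} (hl : l ≠ 0) :
    lensVol3 l = relayPathDensity 1 l := by
  simp only [lensVol3, relayPathDensity, dividedPowDiff, Nat.factorial]
  push_cast
  field_simp
  ring

theorem relayPathDensity_three {r : ℝ} (hr : r ≠ 0) :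
    relayPathDensity 3 r =
      π ^ 3 / 453600 * ((2 + r) * (8 + r) * (14 + r) - 144 / r) * (4 - r) ^ 6 := by
  simp only [relayPathDensity, dividedPowDiff, Nat.factorial]
  push_cast
  field_simp
  ring

theorem fourHop_integral_3d_general {r : ℝ} (hr : r ≠ 0) :
    (∫ l₁ in (r - 1)..3, capArea r l₁ * ∫ l₂ in (l₁ - 1)..2, lensVol3 l₂ * capArea l₁ l₂) =
      π ^ 3 / 453600 * ((2 + r) * (8 + r) * (14 + r) - 144 / r) * (4 - r) ^ 6 := by
  have inner_eq (l₁ : ℝ) (hl₁ : l₁ ≠ 0) :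
      ∫ l₂ in (l₁ - 1)..2, lensVol3 l₂ * capArea l₁ l₂ = relayPathDensity 2 l₁ := by
    simpa only [Nat.cast_one, one_add_one_eq_two, mul_comm (capArea _ _)] using
      integral_capArea_mul_of_eq_relayPathDensity
        (fun l₂ hl₂ ↦ lensVol3_eq_relayPathDensity hl₂) hl₁
  rw [← relayPathDensity_three hr]
  simpa only [Nat.cast_ofNat, two_add_one_eq_three, Nat.reduceAdd] using
    integral_capArea_mul_of_eq_relayPathDensity inner_eq hr

/-- For `r ∈ [3,4]`, the exact identity
`∫_{r−1}^{3} S(r,λ₁)·(∫_{λ₁−1}^{2} V(λ₂)·S(λ₁,λ₂) dλ₂) dλ₁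
  = (π³/453600)·((2+r)(8+r)(14+r) − 144/r)·(4−r)⁶` holds. -/
theorem fourHop_integral_3d (r : ℝ) (hr : r ∈ Set.Icc (3 : ℝ) 4) :
    (∫ l₁ in (r - 1)..3, capArea r l₁ * ∫ l₂ in (l₁ - 1)..2, lensVol3 l₂ * capArea l₁ l₂) =
      π ^ 3 / 453600 * ((2 + r) * (8 + r) * (14 + r) - 144 / r) * (4 - r) ^ 6 := by
  have hr_pos : 0 < r := by linarith [hr.1]
  exact fourHop_integral_3d_general hr_pos.ne'
end

section
/- Let R > 0 and 0 ≤ ε < R, and define r(θ) = √(R² − ε² sin²θ) − ε·cos θ. Then ∫₀^{2π} r(θ)·r(θ + π)·( r(θ) + r(θ + π) ) dθ = 8R·(R² − ε²)·E(ε/R), where E(k) = ∫₀^{π/2} √(1 − k² sin²θ) dθ is the complete elliptic integral of the second kind. Consequently the continuum betweenness g(ε) = (1/(4V²))·∫₀^{2π} r(θ)r(θ+π)(r(θ)+r(θ+π)) dθ with V = πR² equals (2(R² − ε²)/(π²R³))·E(ε/R). -/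
open Real intervalIntegral

/-- The complete elliptic integral of the second kind,
`E(k) = ∫₀^{π/2} √(1 − k² sin²θ) dθ`. -/
noncomputable def ellipticE (k : ℝ) : ℝ :=
  ∫ θ in (0 : ℝ)..(π / 2), Real.sqrt (1 - k ^ 2 * Real.sin θ ^ 2)

/-!
The two distances from a point to the circle along a chord multiply to `R² − ε²`, the power of the
point, so only the chord length `2√(R² − ε² sin²θ)` depends on the direction. This length is
symmetric about `θ = π` and about `θ = π/2`, which reduces the full turn to four copies of the
quarter turn defining the elliptic integral.
-/

theorem intervalIntegral_eq_two_smul_of_reflect {E : Type*} [NormedAddCommGroup E]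
    [NormedSpace ℝ E] {f : ℝ → E} {a c : ℝ} (hf : IntervalIntegrable f MeasureTheory.volume a c)
    (hsymm : ∀ x, f (2 * c - x) = f x) :
    ∫ x in a..(2 * c - a), f x = (2 : ℝ) • ∫ x in a..c, f x := by
  have hreflect : 2 * c - c = c := by ring
  have hf' : IntervalIntegrable f MeasureTheory.volume c (2 * c - a) := by
    simpa only [hsymm, hreflect] using (hf.comp_sub_left (2 * c)).symm
  have hhalves : ∫ x in c..(2 * c - a), f x = ∫ x in a..c, f x := by
    simpa only [hsymm, hreflect] using (integral_comp_sub_left (a := a) (b := c) f (2 * c)).symm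
  rw [← integral_add_adjacent_intervals hf hf', hhalves, two_smul]

theorem integral_sqrt_one_sub_sq_mul_sin_sq (k : ℝ) :
    ∫ θ in (0 : ℝ)..(2 * π), √(1 - k ^ 2 * sin θ ^ 2) = 4 * ellipticE k := by
  have hcont : Continuous fun θ : ℝ ↦ √(1 - k ^ 2 * sin θ ^ 2) := by fun_prop
  have hfull : ∫ θ in (0 : ℝ)..(2 * π), √(1 - k ^ 2 * sin θ ^ 2) =
      2 * ∫ θ in (0 : ℝ)..π, √(1 - k ^ 2 * sin θ ^ 2) := by
    simpa only [sub_zero, smul_eq_mul] using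
      intervalIntegral_eq_two_smul_of_reflect (hcont.intervalIntegrable 0 π) fun θ ↦ by
        rw [sin_two_pi_sub, neg_sq]
  have hhalf : ∫ θ in (0 : ℝ)..π, √(1 - k ^ 2 * sin θ ^ 2) = 2 * ellipticE k := by
    simpa only [ellipticE, sub_zero, smul_eq_mul, mul_div_cancel₀ π two_ne_zero] using
      intervalIntegral_eq_two_smul_of_reflect (hcont.intervalIntegrable 0 (π / 2)) fun θ ↦ by
        rw [mul_div_cancel₀ π two_ne_zero, sin_pi_sub]
  rw [hfull, hhalf]
  ring

theorem sqrt_sq_sub_sq_mul {a : ℝ} (ha : 0 < a) (b x : ℝ) :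
    √(a ^ 2 - b ^ 2 * x) = a * √(1 - (b / a) ^ 2 * x) := by
  have hfactor : a ^ 2 - b ^ 2 * x = a ^ 2 * (1 - (b / a) ^ 2 * x) := by field_simp
  rw [hfactor, sqrt_mul (sq_nonneg a), sqrt_sq ha.le]

/-- The distance `r(θ)` to the circle of radius `R`, in direction `θ`, from the point at signed
distance `ε` from the centre along the axis `θ = 0`. The formula has this meaning only for
`|ε| ≤ R`. -/
noncomputable def boundaryDist (R ε θ : ℝ) : ℝ :=
  √(R ^ 2 - ε ^ 2 * sin θ ^ 2) - ε * cos θ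

theorem boundaryDist_add_pi (R ε θ : ℝ) :
    boundaryDist R ε (θ + π) = √(R ^ 2 - ε ^ 2 * sin θ ^ 2) + ε * cos θ := by
  rw [boundaryDist, sin_add_pi, cos_add_pi, neg_sq, mul_neg, sub_neg_eq_add]

theorem boundaryDist_add_boundaryDist_add_pi (R ε θ : ℝ) :
    boundaryDist R ε θ + boundaryDist R ε (θ + π) = 2 * √(R ^ 2 - ε ^ 2 * sin θ ^ 2) := by
  rw [boundaryDist_add_pi, boundaryDist]
  ring

theorem boundaryDist_mul_boundaryDist_add_pi {R ε : ℝ} (hε : |ε| ≤ R) (θ : ℝ) :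
    boundaryDist R ε θ * boundaryDist R ε (θ + π) = R ^ 2 - ε ^ 2 := by
  have hnonneg : 0 ≤ R ^ 2 - ε ^ 2 * sin θ ^ 2 := sub_nonneg.2 <|
    calc
      ε ^ 2 * sin θ ^ 2 ≤ ε ^ 2 := mul_le_of_le_one_right (sq_nonneg ε) (sin_sq_le_one θ)
      _ ≤ R ^ 2 := sq_le_sq.2 (hε.trans (le_abs_self R))
  calc
    boundaryDist R ε θ * boundaryDist R ε (θ + π)
        = √(R ^ 2 - ε ^ 2 * sin θ ^ 2) ^ 2 - ε ^ 2 * cos θ ^ 2 := by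
      rw [boundaryDist_add_pi, boundaryDist]
      ring
    _ = R ^ 2 - ε ^ 2 * (sin θ ^ 2 + cos θ ^ 2) := by
      rw [sq_sqrt hnonneg]
      ring
    _ = R ^ 2 - ε ^ 2 := by rw [sin_sq_add_cos_sq, mul_one]

theorem integral_boundaryDist_mul_mul_add {R ε : ℝ} (hR : 0 < R) (hε : |ε| ≤ R) :
    ∫ θ in (0 : ℝ)..(2 * π), boundaryDist R ε θ * boundaryDist R ε (θ + π) *
        (boundaryDist R ε θ + boundaryDist R ε (θ + π)) =
      8 * R * (R ^ 2 - ε ^ 2) * ellipticE (ε / R) := by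
  simp only [boundaryDist_mul_boundaryDist_add_pi hε, boundaryDist_add_boundaryDist_add_pi,
    sqrt_sq_sub_sq_mul hR, integral_const_mul, integral_sqrt_one_sub_sq_mul_sin_sq]
  ring

/-- With `r(θ) = √(R² − ε² sin²θ) − ε cos θ` for `0 ≤ ε < R`, we have
`∫₀^{2π} r(θ)r(θ+π)(r(θ)+r(θ+π)) dθ = 8R(R² − ε²)E(ε/R)`; consequently the continuum
betweenness `g(ε) = (1/(4V²))·∫₀^{2π} r(θ)r(θ+π)(r(θ)+r(θ+π)) dθ` with `V = πR²` equals
`(2(R² − ε²)/(π²R³))·E(ε/R)`. -/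
theorem continuum_betweenness_disk (R ε : ℝ) (hR : 0 < R) (hε : 0 ≤ ε) (hεR : ε < R) :
    (∫ θ in (0 : ℝ)..(2 * π),
        (Real.sqrt (R ^ 2 - ε ^ 2 * Real.sin θ ^ 2) - ε * Real.cos θ) *
          (Real.sqrt (R ^ 2 - ε ^ 2 * Real.sin (θ + π) ^ 2) - ε * Real.cos (θ + π)) *
          ((Real.sqrt (R ^ 2 - ε ^ 2 * Real.sin θ ^ 2) - ε * Real.cos θ) +
            (Real.sqrt (R ^ 2 - ε ^ 2 * Real.sin (θ + π) ^ 2) - ε * Real.cos (θ + π)))) =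
      8 * R * (R ^ 2 - ε ^ 2) * ellipticE (ε / R) ∧
    (1 / (4 * (π * R ^ 2) ^ 2)) *
        (∫ θ in (0 : ℝ)..(2 * π),
          (Real.sqrt (R ^ 2 - ε ^ 2 * Real.sin θ ^ 2) - ε * Real.cos θ) *
            (Real.sqrt (R ^ 2 - ε ^ 2 * Real.sin (θ + π) ^ 2) - ε * Real.cos (θ + π)) *
            ((Real.sqrt (R ^ 2 - ε ^ 2 * Real.sin θ ^ 2) - ε * Real.cos θ) +
              (Real.sqrt (R ^ 2 - ε ^ 2 * Real.sin (θ + π) ^ 2) - ε * Real.cos (θ + π)))) =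
      2 * (R ^ 2 - ε ^ 2) / (π ^ 2 * R ^ 3) * ellipticE (ε / R) := by
  have hchords := integral_boundaryDist_mul_mul_add hR ((abs_of_nonneg hε).trans_le hεR.le)
  refine ⟨hchords, (congrArg _ hchords).trans ?_⟩
  field_simp
  ring
end

section
/- Let G be a simple graph on a finite vertex set whose maximum degree is at most Δ ≥ 1, let v be a vertex of G, and let n ≥ 1. Then the number of vertex subsets S with |S| = n, v ∈ S, and such that the subgraph of G induced on S is connected, is at most (e·Δ)^n, where e is Euler's number. -/
/-!
Keep each vertex independently with probability `p = 1 / Δ`. The cluster of `v` equals a given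
connected set `S ∋ v` exactly when `S` is kept and its outer boundary `∂S` is removed, which has
probability `p ^ |S| * (1 - p) ^ |∂S|`. These events are disjoint for distinct `S`, so the
probabilities sum to at most `1`. If `|S| = n ≥ 2`, every vertex of `S` has at most `Δ - 1`
neighbours outside `S`, hence `|∂S| ≤ (Δ - 1) * n` and every summand is at least
`(p * (1 - p) ^ (Δ - 1)) ^ n ≥ (e * Δ) ^ (-n)`.
-/

open Finset

section SetPairs

variable {α R : Type*} [CommSemiring R]

lemma sum_Icc_pow_card_mul_pow_card_sdiff [DecidableEq α] {A C W : Finset α} (hAC : A ⊆ C)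
    (hCW : C ⊆ W) (p q : R) :
    ∑ T ∈ Icc A C, p ^ #T * q ^ #(W \ T) = p ^ #A * q ^ #(W \ C) * (p + q) ^ #(C \ A) := by
  have hdisj : ∀ U ∈ (C \ A).powerset, Disjoint A U := fun U hU ↦
    disjoint_sdiff.mono_right (mem_powerset.1 hU)
  have hinj : Set.InjOn (A ∪ ·) (C \ A).powerset := fun U hU U' hU' h ↦ by
    rw [← union_sdiff_cancel_left (hdisj U hU), ← union_sdiff_cancel_left (hdisj U' hU')]
    exact congrArg (· \ A) h
  rw [Icc_eq_image_powerset hAC, sum_image hinj, ← sum_pow_mul_eq_add_pow, mul_sum]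
  refine sum_congr rfl fun U hU ↦ ?_
  have hU' : U ⊆ C \ A := mem_powerset.1 hU
  have hkept : #(A ∪ U) = #A + #U := card_union_of_disjoint (hdisj U hU)
  have hremoved : #(W \ (A ∪ U)) = #(W \ C) + (#(C \ A) - #U) := by
    have hAUC : A ∪ U ⊆ C := union_subset hAC (hU'.trans sdiff_subset)
    have hUcard := card_le_card hU'
    have hAcard := card_le_card hAC
    have hCcard := card_le_card hCW
    rw [card_sdiff_of_subset hAC] at hUcard ⊢
    rw [card_sdiff_of_subset (hAUC.trans hCW), card_sdiff_of_subset hCW, hkept]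
    omega
  rw [hkept, hremoved, pow_add, pow_add]
  ring

/-- Tuza's inequality for weakly cross-intersecting set pairs. Keeping each point with probability
`p`, the hypotheses make the events that `A i` is kept and `B i` is removed pairwise disjoint. -/
theorem sum_pow_card_mul_pow_card_le_one [PartialOrder R] [IsOrderedRing R] {ι : Type*}
    {F : Finset ι} {A B : ι → Finset α} {p q : R} (hp : 0 ≤ p) (hq : 0 ≤ q) (hpq : p + q = 1)
    (hAB : ∀ i ∈ F, Disjoint (A i) (B i))
    (hcross : ∀ i ∈ F, ∀ j ∈ F, Disjoint (A i) (B j) → Disjoint (A j) (B i) → i = j) :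
    ∑ i ∈ F, p ^ #(A i) * q ^ #(B i) ≤ 1 := by
  classical
  let W : Finset α := F.biUnion fun i ↦ A i ∪ B i
  have hW : ∀ i ∈ F, A i ∪ B i ⊆ W := fun i hi ↦ subset_biUnion_of_mem (fun i ↦ A i ∪ B i) hi
  have hdisj : (F : Set ι).PairwiseDisjoint fun i ↦ Icc (A i) (W \ B i) := by
    intro i hi j hj hij
    refine disjoint_left.2 fun T hTi hTj ↦ hij (hcross i hi j hj ?_ ?_)
    · exact disjoint_of_subset_left ((mem_Icc.1 hTi).1.trans (mem_Icc.1 hTj).2) sdiff_disjoint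
    · exact disjoint_of_subset_left ((mem_Icc.1 hTj).1.trans (mem_Icc.1 hTi).2) sdiff_disjoint
  calc ∑ i ∈ F, p ^ #(A i) * q ^ #(B i)
      = ∑ i ∈ F, ∑ T ∈ Icc (A i) (W \ B i), p ^ #T * q ^ #(W \ T) := by
        refine sum_congr rfl fun i hi ↦ ?_
        have hAW : A i ⊆ W \ B i :=
          subset_sdiff.2 ⟨subset_union_left.trans (hW i hi), hAB i hi⟩
        rw [sum_Icc_pow_card_mul_pow_card_sdiff hAW sdiff_subset, hpq, one_pow, mul_one,
          Finset.sdiff_sdiff_eq_self (subset_union_right.trans (hW i hi))]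
    _ = ∑ T ∈ F.biUnion fun i ↦ Icc (A i) (W \ B i), p ^ #T * q ^ #(W \ T) :=
        (sum_biUnion hdisj).symm
    _ ≤ ∑ T ∈ Icc ∅ W, p ^ #T * q ^ #(W \ T) :=
        sum_le_sum_of_subset_of_nonneg
          (biUnion_subset.2 fun i _ ↦ Icc_subset_Icc (empty_subset _) sdiff_subset)
          fun T _ _ ↦ mul_nonneg (pow_nonneg hp _) (pow_nonneg hq _)
    _ = 1 := by
        simp [sum_Icc_pow_card_mul_pow_card_sdiff (empty_subset W) Subset.rfl, hpq]

end SetPairs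

section OuterBoundary

variable {V : Type*} [DecidableEq V] {G : SimpleGraph V} [G.LocallyFinite] {S T : Finset V}

variable (G S) in
/-- The outer vertex boundary of `S` in `G`: the vertices outside `S` with a neighbour in `S`. -/
def outerBoundary : Finset V :=
  S.biUnion fun x ↦ G.neighborFinset x \ S

lemma mem_outerBoundary {y : V} : y ∈ outerBoundary G S ↔ y ∉ S ∧ ∃ x ∈ S, G.Adj x y := by
  simp only [outerBoundary, mem_biUnion, mem_sdiff, SimpleGraph.mem_neighborFinset]
  tauto

lemma disjoint_outerBoundary : Disjoint S (outerBoundary G S) :=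
  disjoint_right.2 fun _ hy ↦ (mem_outerBoundary.1 hy).1

lemma subset_of_disjoint_outerBoundary {v : V} (hS : (G.induce (S : Set V)).Preconnected)
    (hvS : v ∈ S) (hvT : v ∈ T) (hdisj : Disjoint S (outerBoundary G T)) : S ⊆ T := by
  intro y hyS
  by_contra hyT
  obtain ⟨walk⟩ := hS ⟨v, hvS⟩ ⟨y, hyS⟩
  obtain ⟨d, -, hd_fst, hd_snd⟩ := walk.exists_boundary_dart {x | x.1 ∈ T} hvT hyT
  exact disjoint_left.1 hdisj d.snd.2 (mem_outerBoundary.2 ⟨hd_snd, d.fst, hd_fst, d.adj⟩)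

lemma card_outerBoundary_le {k : ℕ} (hdeg : ∀ x ∈ S, G.degree x ≤ k + 1) (hS : S.Nontrivial)
    (hconn : (G.induce (S : Set V)).Preconnected) : #(outerBoundary G S) ≤ #S * k := by
  refine card_biUnion_le_card_mul _ _ _ fun x hx ↦ ?_
  have : Nontrivial (S : Set V) := hS.coe_sort
  obtain ⟨y, hxy⟩ := hconn.exists_adj_of_nontrivial ⟨x, hx⟩
  have hssub : G.neighborFinset x \ S ⊂ G.neighborFinset x :=
    (ssubset_iff_of_subset sdiff_subset).2
      ⟨y, (G.mem_neighborFinset x y).2 hxy, fun hy ↦ (mem_sdiff.1 hy).2 y.2⟩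
  exact Nat.le_of_lt_succ ((card_lt_card hssub).trans_le (hdeg x hx))

theorem sum_pow_card_mul_pow_card_outerBoundary_le_one {R : Type*} [CommSemiring R]
    [PartialOrder R] [IsOrderedRing R] {p q : R} (hp : 0 ≤ p) (hq : 0 ≤ q) (hpq : p + q = 1)
    {v : V} {F : Finset (Finset V)}
    (hF : ∀ S ∈ F, v ∈ S ∧ (G.induce (S : Set V)).Preconnected) :
    ∑ S ∈ F, p ^ #S * q ^ #(outerBoundary G S) ≤ 1 :=
  sum_pow_card_mul_pow_card_le_one hp hq hpq (fun _ _ ↦ disjoint_outerBoundary)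
    fun S hS T hT hST hTS ↦ Subset.antisymm
      (subset_of_disjoint_outerBoundary (hF S hS).2 (hF S hS).1 (hF T hT).1 hST)
      (subset_of_disjoint_outerBoundary (hF T hT).2 (hF T hT).1 (hF S hS).1 hTS)

end OuterBoundary

lemma one_le_exp_one_mul_one_sub_inv_pow (k : ℕ) :
    1 ≤ Real.exp 1 * (1 - ((k : ℝ) + 1)⁻¹) ^ k := by
  rcases k.eq_zero_or_pos with rfl | hk
  · simp
  have hinv : (1 + (k : ℝ)⁻¹) * (1 - ((k : ℝ) + 1)⁻¹) = 1 := by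
    field_simp
    ring
  have hnonneg : 0 ≤ 1 - ((k : ℝ) + 1)⁻¹ := sub_nonneg.2 (inv_le_one_of_one_le₀ (by simp))
  calc 1 = (1 + (k : ℝ)⁻¹) ^ k * (1 - ((k : ℝ) + 1)⁻¹) ^ k := by
        rw [← mul_pow, hinv, one_pow]
    _ ≤ Real.exp 1 * (1 - ((k : ℝ) + 1)⁻¹) ^ k := by
        gcongr
        exact Real.one_add_inv_pow_le_exp

lemma card_le_one_of_forall_card_le_one_and_mem {α : Type*} {a : α} {F : Finset (Finset α)}
    (hF : ∀ S ∈ F, #S ≤ 1 ∧ a ∈ S) : #F ≤ 1 := by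
  have hsingleton : ∀ S ∈ F, S = {a} := fun S hS ↦
    eq_singleton_iff_unique_mem.2
      ⟨(hF S hS).2, fun x hx ↦ card_le_one.1 (hF S hS).1 x hx a (hF S hS).2⟩
  exact card_le_one.2 fun S hS T hT ↦ (hsingleton S hS).trans (hsingleton T hT).symm

section Count

variable {V : Type*} {G : SimpleGraph V} [G.LocallyFinite] {v : V} {n k : ℕ}
  {F : Finset (Finset V)}

lemma card_le_exp_mul_pow_of_two_le (hdeg : ∀ w, G.degree w ≤ k + 1) (hn : 2 ≤ n)
    (hF : ∀ S ∈ F, #S = n ∧ v ∈ S ∧ (G.induce (S : Set V)).Preconnected) :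
    (#F : ℝ) ≤ (Real.exp 1 * (k + 1)) ^ n := by
  classical
  set p : ℝ := ((k : ℝ) + 1)⁻¹ with hp
  have hp0 : 0 ≤ p := by positivity
  have hp1 : p ≤ 1 := inv_le_one_of_one_le₀ (by simp)
  have hq0 : 0 ≤ 1 - p := sub_nonneg.2 hp1
  have hweight : ∀ S ∈ F, (p * (1 - p) ^ k) ^ n ≤ p ^ #S * (1 - p) ^ #(outerBoundary G S) := by
    intro S hS
    obtain ⟨rfl, -, hconn⟩ := hF S hS
    have hbdry := card_outerBoundary_le (fun x _ ↦ hdeg x) (one_lt_card_iff_nontrivial.1 hn) hconn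
    rw [mul_pow, ← pow_mul, mul_comm k]
    gcongr ?_ * ?_
    exact pow_le_pow_of_le_one hq0 (sub_le_self 1 hp0) hbdry
  have htotal : #F * (p * (1 - p) ^ k) ^ n ≤ 1 := by
    rw [← nsmul_eq_mul]
    exact (card_nsmul_le_sum F _ _ hweight).trans <|
      sum_pow_card_mul_pow_card_outerBoundary_le_one hp0 hq0 (add_sub_cancel p 1)
        fun S hS ↦ (hF S hS).2
  calc (#F : ℝ) ≤ #F * (Real.exp 1 * (1 - p) ^ k) ^ n :=
        le_mul_of_one_le_right (by positivity)
          (one_le_pow₀ (one_le_exp_one_mul_one_sub_inv_pow k))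
    _ = (Real.exp 1 * (k + 1)) ^ n * (#F * (p * (1 - p) ^ k) ^ n) := by
        rw [mul_left_comm, ← mul_pow, hp]
        congr 2
        field_simp
    _ ≤ (Real.exp 1 * (k + 1)) ^ n := mul_le_of_le_one_right (by positivity) htotal

lemma card_le_exp_mul_pow (hdeg : ∀ w, G.degree w ≤ k + 1)
    (hF : ∀ S ∈ F, #S = n ∧ v ∈ S ∧ (G.induce (S : Set V)).Preconnected) :
    (#F : ℝ) ≤ (Real.exp 1 * (k + 1)) ^ n := by
  rcases le_or_gt 2 n with hn | hn
  · exact card_le_exp_mul_pow_of_two_le hdeg hn hF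
  · have hcard : #F ≤ 1 := card_le_one_of_forall_card_le_one_and_mem (a := v) fun S hS ↦
      ⟨(hF S hS).1.trans_le (Nat.le_of_lt_succ hn), (hF S hS).2.1⟩
    calc (#F : ℝ) ≤ 1 := mod_cast hcard
      _ ≤ (Real.exp 1 * (k + 1)) ^ n :=
        one_le_pow₀ (one_le_mul_of_one_le_of_one_le (Real.one_le_exp zero_le_one) (by simp))

end Count

lemma finite_and_ncard_le_of_forall_finset_card_le {α : Type*} {s : Set α} {C : ℝ}
    (h : ∀ F : Finset α, (∀ x ∈ F, x ∈ s) → (#F : ℝ) ≤ C) : s.Finite ∧ (s.ncard : ℝ) ≤ C := by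
  have hfin : s.Finite := by
    by_contra hinf
    obtain ⟨F, hFs, hFcard⟩ := Set.Infinite.exists_subset_card_eq hinf (⌊C⌋₊ + 1)
    have hFC := h F hFs
    rw [hFcard] at hFC
    exact (Nat.lt_floor_add_one C).not_ge (mod_cast hFC)
  refine ⟨hfin, ?_⟩
  rw [Set.ncard_eq_toFinset_card s hfin]
  exact h _ fun x ↦ hfin.mem_toFinset.1

theorem connected_subgraph_count_le_general {V : Type*} (G : SimpleGraph V) [G.LocallyFinite]
    (Δ : ℕ) (hΔ : 1 ≤ Δ) (hdeg : ∀ w : V, G.degree w ≤ Δ) (v : V) (n : ℕ) :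
    {S : Finset V | #S = n ∧ v ∈ S ∧ (G.induce (S : Set V)).Connected}.Finite ∧
      ({S : Finset V | #S = n ∧ v ∈ S ∧ (G.induce (S : Set V)).Connected}.ncard : ℝ)
        ≤ (Real.exp 1 * Δ) ^ n := by
  obtain ⟨k, rfl⟩ := Nat.exists_eq_add_of_le' hΔ
  refine finite_and_ncard_le_of_forall_finset_card_le fun F hF ↦ ?_
  rw [Nat.cast_succ]
  exact card_le_exp_mul_pow hdeg fun S hS ↦
    ⟨(hF S hS).1, (hF S hS).2.1, (hF S hS).2.2.preconnected⟩

/-- If `G` is a simple graph on a finite vertex set with maximum degree at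
most `Δ ≥ 1`, `v` is a vertex and `n ≥ 1`, then the number of `n`-element vertex subsets
containing `v` on which the induced subgraph is connected is at most `(e·Δ)^n`. -/
theorem connected_subgraph_count_le {V : Type*} [Fintype V] (G : SimpleGraph V)
    [DecidableRel G.Adj] (Δ : ℕ) (hΔ : 1 ≤ Δ) (hdeg : ∀ w : V, G.degree w ≤ Δ)
    (v : V) (n : ℕ) (hn : 1 ≤ n) :
    (Nat.card {S : Finset V // S.card = n ∧ v ∈ S ∧ (G.induce (↑S : Set V)).Connected} : ℝ)
      ≤ (Real.exp 1 * Δ) ^ n := by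
  let _ : G.LocallyFinite := fun _ ↦ inferInstance
  exact (connected_subgraph_count_le_general G Δ hΔ hdeg v n).2
end

section
/- Let d ≥ 1 and let x, y be points of d-dimensional Euclidean space with dist(x,y) = r, where 0 ≤ r ≤ 2. Then the Lebesgue volume of the intersection of the two closed unit balls centred at x and y equals (π^{d/2}/Γ(d/2 + 1)) · I_{1 − r²/4}((d+1)/2, 1/2), where I_s(a,b) = (∫₀^s t^{a−1}(1−t)^{b−1} dt)/(∫₀^1 t^{a−1}(1−t)^{b−1} dt) is the regularised incomplete beta function. -/
open MeasureTheory Real intervalIntegral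

/-- The regularised incomplete beta function
`I_s(a,b) = (∫₀^s t^{a−1}(1−t)^{b−1} dt)/(∫₀^1 t^{a−1}(1−t)^{b−1} dt)`. -/
noncomputable def regIncompleteBeta (s a b : ℝ) : ℝ :=
  (∫ t in (0 : ℝ)..s, t ^ (a - 1) * (1 - t) ^ (b - 1)) /
    (∫ t in (0 : ℝ)..1, t ^ (a - 1) * (1 - t) ^ (b - 1))

/-!
Let the centres be `m ± h • v` with `‖v‖ = 1`. The hyperplane orthogonal to `v` through `m + t • v`
meets the lens in a ball of squared radius `ρ² - (|t| + h)²`, so by Cavalieri's principle the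
volume of the lens is a constant `κ`, the volume of the unit ball of one dimension less, times
`2 ∫_h^ρ (ρ² - u²)^((d-1)/2) du`. Taking `h = 0` gives the volume of the whole ball with the same
`κ`. Hence `κ` cancels in the ratio of the two volumes, which the substitution `t = 1 - (u / ρ)²`
turns into the regularised incomplete beta function at `1 - (h / ρ)²`.
-/

open Metric Module Set

theorem integral_one_sub_sq_rpow (a : ℝ) {h : ℝ} (h_nonneg : 0 ≤ h) (h_le : h ≤ 1) :
    ∫ u in h..1, (1 - u ^ 2) ^ a =
      1 / 2 * ∫ t in (0 : ℝ)..(1 - h ^ 2), t ^ a * (1 - t) ^ (-(1 / 2) : ℝ) := by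
  set φ : ℝ → ℝ := fun u ↦ 1 - u ^ 2
  set g : ℝ → ℝ := fun t ↦ t ^ a * (1 - t) ^ (-(1 / 2) : ℝ)
  have hφ (u : ℝ) : HasDerivAt φ (-(2 * u)) u := by
    simpa using (hasDerivAt_pow 2 u).const_sub 1
  have substitution : ∫ u in h..1, (g ∘ φ) u * -(2 * u) = ∫ t in φ h..φ 1, g t :=
    integral_comp_mul_deriv_of_deriv_nonpos (by fun_prop) (fun u _ ↦ hφ u) fun u hu ↦ by
      have : 0 ≤ u := h_nonneg.trans (min_eq_left h_le ▸ hu.1.le)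
      linarith
  have integrand_eq : ∀ u ∈ uIoc h 1, φ u ^ a = -(1 / 2) * ((g ∘ φ) u * -(2 * u)) := by
    intro u hu
    rw [uIoc_of_le h_le] at hu
    have u_pos : 0 < u := h_nonneg.trans_lt hu.1
    have h_inv : (1 - φ u) ^ (-(1 / 2) : ℝ) = u⁻¹ := by
      rw [sub_sub_cancel, rpow_neg (sq_nonneg u), ← sqrt_eq_rpow, sqrt_sq u_pos.le]
    simp only [g, Function.comp_apply, h_inv]
    field_simp
  have φ_one : φ 1 = 0 := by simp [φ]
  rw [integral_congr_ae (.of_forall integrand_eq), intervalIntegral.integral_const_mul,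
    substitution, φ_one, integral_symm, mul_neg, neg_mul, neg_neg]

theorem integral_sq_sub_sq_rpow (a : ℝ) {h ρ : ℝ} (hρ : 0 < ρ) (h_nonneg : 0 ≤ h)
    (h_le : h ≤ ρ) :
    ∫ u in h..ρ, (ρ ^ 2 - u ^ 2) ^ a =
      (ρ ^ 2) ^ a * ρ * ∫ u in (h / ρ)..1, (1 - u ^ 2) ^ a := by
  have integrand_eq : ∀ u ∈ uIcc h ρ,
      (ρ ^ 2 - u ^ 2) ^ a = (ρ ^ 2) ^ a * (1 - (u / ρ) ^ 2) ^ a := by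
    intro u hu
    rw [uIcc_of_le h_le] at hu
    have u_nonneg : 0 ≤ u := h_nonneg.trans hu.1
    have h_sq : (u / ρ) ^ 2 ≤ 1 := pow_le_one₀ (by positivity) ((div_le_one hρ).2 hu.2)
    rw [← mul_rpow (sq_nonneg ρ) (sub_nonneg.2 h_sq)]
    congr 1
    field_simp
  rw [integral_congr integrand_eq, intervalIntegral.integral_const_mul,
    integral_comp_div (fun u ↦ (1 - u ^ 2) ^ a) hρ.ne', div_self hρ.ne', smul_eq_mul, mul_assoc]

theorem regIncompleteBeta_one_sub_sq (a : ℝ) {h : ℝ} (h_nonneg : 0 ≤ h) (h_le : h ≤ 1) :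
    regIncompleteBeta (1 - h ^ 2) (a + 1) (1 / 2) =
      (∫ u in h..1, (1 - u ^ 2) ^ a) / ∫ u in (0 : ℝ)..1, (1 - u ^ 2) ^ a := by
  have h_exp : (1 / 2 - 1 : ℝ) = -(1 / 2) := by norm_num
  rw [integral_one_sub_sq_rpow a h_nonneg h_le, integral_one_sub_sq_rpow a le_rfl zero_le_one,
    mul_div_mul_left _ _ one_half_pos.ne', regIncompleteBeta, add_sub_cancel_right, h_exp,
    zero_pow two_ne_zero, sub_zero]

theorem regIncompleteBeta_one_sub_div_sq (a : ℝ) {h ρ : ℝ} (hρ : 0 < ρ) (h_nonneg : 0 ≤ h)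
    (h_le : h ≤ ρ) :
    regIncompleteBeta (1 - (h / ρ) ^ 2) (a + 1) (1 / 2) =
      (∫ u in h..ρ, (ρ ^ 2 - u ^ 2) ^ a) / ∫ u in (0 : ℝ)..ρ, (ρ ^ 2 - u ^ 2) ^ a := by
  rw [integral_sq_sub_sq_rpow a hρ h_nonneg h_le, integral_sq_sub_sq_rpow a hρ le_rfl hρ.le,
    mul_div_mul_left _ _ (by positivity), zero_div,
    regIncompleteBeta_one_sub_sq a (by positivity) ((div_le_one hρ).2 h_le)]

theorem setIntegral_Icc_comp_abs (g : ℝ → ℝ) {b : ℝ} (hb : 0 ≤ b) :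
    ∫ t in Icc (-b) b, g |t| = 2 * ∫ t in (0 : ℝ)..b, g t := by
  have h_indicator : (Icc (-b) b).indicator (fun t ↦ g |t|) =
      fun t ↦ (Iic b).indicator g |t| := by
    ext t
    simp only [indicator, mem_Iic, mem_Icc, abs_le]
  rw [← MeasureTheory.integral_indicator measurableSet_Icc, h_indicator, integral_comp_abs,
    setIntegral_indicator measurableSet_Iic, Ioi_inter_Iic, integral_of_le hb]

theorem max_add_sq_sub_sq (t : ℝ) {h : ℝ} (h_nonneg : 0 ≤ h) :
    max ((t + h) ^ 2) ((t - h) ^ 2) = (|t| + h) ^ 2 := by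
  rcases le_total 0 t with ht | ht
  · rw [abs_of_nonneg ht, max_eq_left (by nlinarith)]
  · rw [abs_of_nonpos ht, max_eq_right (by nlinarith)]
    ring

theorem exists_norm_eq_one_and_norm_smul_eq {E : Type*} [NormedAddCommGroup E] [NormedSpace ℝ E]
    [Nontrivial E] (w : E) : ∃ v : E, ‖v‖ = 1 ∧ ‖w‖ • v = w := by
  rcases eq_or_ne w 0 with rfl | hw
  · obtain ⟨v, hv⟩ := exists_norm_eq E zero_le_one
    exact ⟨v, hv, by simp⟩
  · exact ⟨‖w‖⁻¹ • w, norm_smul_inv_norm hw, smul_inv_smul₀ (norm_ne_zero_iff.2 hw) w⟩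

section AddHaar

variable {F : Type*} [NormedAddCommGroup F] [NormedSpace ℝ F] [FiniteDimensional ℝ F]
  [MeasurableSpace F] [BorelSpace F] (μ : Measure F) [μ.IsAddHaarMeasure]

theorem addHaar_setOf_norm_sq_le {c : ℝ} (hc : 0 ≤ c) :
    μ {w | ‖w‖ ^ 2 ≤ c} =
      ENNReal.ofReal (c ^ ((finrank ℝ F : ℝ) / 2)) * μ (closedBall 0 1) := by
  have h_ball : {w : F | ‖w‖ ^ 2 ≤ c} = closedBall 0 √c := by
    ext w
    simp [le_sqrt (norm_nonneg w) hc]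
  rw [h_ball, Measure.addHaar_closedBall' μ 0 (sqrt_nonneg c), rpow_div_two_eq_sqrt _ hc,
    rpow_natCast]

theorem lintegral_addHaar_setOf_norm_sq_le {h ρ : ℝ} (h_nonneg : 0 ≤ h) (h_le : h ≤ ρ) :
    ∫⁻ t : ℝ, μ {w | ‖w‖ ^ 2 ≤ ρ ^ 2 - (|t| + h) ^ 2} =
      ENNReal.ofReal (2 * ∫ u in h..ρ, (ρ ^ 2 - u ^ 2) ^ ((finrank ℝ F : ℝ) / 2)) *
        μ (closedBall 0 1) := by
  set a : ℝ := (finrank ℝ F : ℝ) / 2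
  set κ := μ (closedBall 0 1)
  set I : Set ℝ := Icc (-(ρ - h)) (ρ - h)
  set f : ℝ → ℝ := fun t ↦ ρ ^ 2 - (t + h) ^ 2
  have mem_I_iff (t : ℝ) : t ∈ I ↔ 0 ≤ f |t| := by
    rw [mem_Icc, ← abs_le, le_sub_iff_add_le, sub_nonneg,
      sq_le_sq₀ (by positivity) (h_nonneg.trans h_le)]
  have slice_eq (t : ℝ) :
      μ {w | ‖w‖ ^ 2 ≤ f |t|} = I.indicator (fun t ↦ ENNReal.ofReal (f |t| ^ a) * κ) t := by
    by_cases ht : t ∈ I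
    · rw [indicator_of_mem ht, addHaar_setOf_norm_sq_le μ ((mem_I_iff t).1 ht)]
    · have h_empty : {w : F | ‖w‖ ^ 2 ≤ f |t|} = ∅ :=
        eq_empty_of_forall_notMem fun w hw ↦ ht ((mem_I_iff t).2 ((sq_nonneg ‖w‖).trans hw))
      rw [indicator_of_notMem ht, h_empty, measure_empty]
  have f_cont : Continuous fun t ↦ f |t| ^ a :=
    Continuous.rpow_const (by fun_prop) fun _ ↦ Or.inr (by positivity)
  calc ∫⁻ t, μ {w | ‖w‖ ^ 2 ≤ f |t|}
      = (∫⁻ t in I, ENNReal.ofReal (f |t| ^ a)) * κ := by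
        simp_rw [slice_eq]
        rw [lintegral_indicator measurableSet_Icc, lintegral_mul_const _ (by fun_prop)]
    _ = ENNReal.ofReal (∫ t in I, f |t| ^ a) * κ := by
        rw [ofReal_integral_eq_lintegral_ofReal f_cont.integrableOn_Icc]
        exact (ae_restrict_iff' measurableSet_Icc).2
          (.of_forall fun t ht ↦ rpow_nonneg ((mem_I_iff t).1 ht) a)
    _ = ENNReal.ofReal (2 * ∫ u in h..ρ, (ρ ^ 2 - u ^ 2) ^ a) * κ := by
        rw [setIntegral_Icc_comp_abs (fun t ↦ f t ^ a) (sub_nonneg.2 h_le),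
          integral_comp_add_right (fun u ↦ (ρ ^ 2 - u ^ 2) ^ a), zero_add, sub_add_cancel]

end AddHaar

section InnerProductSpace

variable {E : Type*} [NormedAddCommGroup E] [InnerProductSpace ℝ E]

theorem norm_smul_add_sq_of_mem_orthogonal {v w : E} (hv : ‖v‖ = 1) (hw : w ∈ (ℝ ∙ v)ᗮ) (t : ℝ) :
    ‖t • v + w‖ ^ 2 = t ^ 2 + ‖w‖ ^ 2 := by
  have h_inner : inner ℝ (t • v) w = 0 := by
    rw [inner_smul_left, Submodule.mem_orthogonal_singleton_iff_inner_right.1 hw, mul_zero]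
  rw [sq, norm_add_sq_eq_norm_sq_add_norm_sq_real h_inner, norm_smul, hv, mul_one,
    ← sq, ← sq, norm_eq_abs, sq_abs]

theorem setOf_mem_closedBall_inter_closedBall_eq {v : E} (hv : ‖v‖ = 1) (m : E) {h ρ : ℝ}
    (hρ : 0 ≤ ρ) (h_nonneg : 0 ≤ h) (t : ℝ) :
    {w : (ℝ ∙ v)ᗮ | m + (t • v + w) ∈
      closedBall (m - h • v) ρ ∩ closedBall (m + h • v) ρ} =
      {w | ‖w‖ ^ 2 ≤ ρ ^ 2 - (|t| + h) ^ 2} := by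
  ext w
  have h_left : m + (t • v + w) - (m - h • v) = (t + h) • v + w := by module
  have h_right : m + (t • v + w) - (m + h • v) = (t - h) • v + w := by module
  simp only [mem_ofPred_eq, mem_inter_iff, mem_closedBall, dist_eq_norm, h_left, h_right,
    ← sq_le_sq₀ (norm_nonneg _) hρ, norm_smul_add_sq_of_mem_orthogonal hv w.2,
    Submodule.coe_norm]
  rw [← le_sub_iff_add_le, ← le_sub_iff_add_le, ← max_le_iff, max_add_sq_sub_sq t h_nonneg,
    le_sub_comm]

variable [FiniteDimensional ℝ E]

theorem finrank_orthogonal_span_singleton_add_one {v : E} (hv : v ≠ 0) :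
    finrank ℝ (ℝ ∙ v)ᗮ + 1 = finrank ℝ E := by
  rw [← (ℝ ∙ v).finrank_add_finrank_orthogonal, finrank_span_singleton hv, add_comm]

variable [MeasurableSpace E] [BorelSpace E]

theorem volume_eq_lintegral_orthogonal_slices {v : E} (hv : ‖v‖ = 1) (m : E) {s : Set E}
    (hs : MeasurableSet s) :
    volume s = ∫⁻ t : ℝ, volume {w : (ℝ ∙ v)ᗮ | m + (t • v + w) ∈ s} := by
  have h_prod : MeasurePreserving ((ℝ ∙ v).measurableEquivProd m).symm := by
    have := (ℝ ∙ v).measurePreserving_measurableEquivProd m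
    rw [InnerProductSpace.euclideanHausdorffMeasure_eq_volume] at this
    exact this.symm
  set L := LinearIsometryEquiv.toSpanUnitSingleton (𝕜 := ℝ) v hv
  have slice_eq (t : ℝ) : Prod.mk (L t) ⁻¹' (((ℝ ∙ v).measurableEquivProd m).symm ⁻¹' s) =
      {w : (ℝ ∙ v)ᗮ | m + (t • v + w) ∈ s} := by
    ext w
    simp [L, add_comm m]
  rw [← h_prod.measure_preimage_equiv, Measure.volume_eq_prod,
    Measure.prod_apply (((ℝ ∙ v).measurableEquivProd m).symm.measurable hs),
    ← L.measurePreserving.lintegral_comp_emb L.toHomeomorph.measurableEmbedding]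
  simp_rw [slice_eq]

theorem volume_closedBall_inter_closedBall_eq_integral {v : E} (hv : ‖v‖ = 1) (m : E)
    {h ρ : ℝ} (h_nonneg : 0 ≤ h) (h_le : h ≤ ρ) :
    volume (closedBall (m - h • v) ρ ∩ closedBall (m + h • v) ρ) =
      ENNReal.ofReal (2 * ∫ u in h..ρ, (ρ ^ 2 - u ^ 2) ^ ((finrank ℝ (ℝ ∙ v)ᗮ : ℝ) / 2)) *
        volume (closedBall (0 : (ℝ ∙ v)ᗮ) 1) := by
  rw [volume_eq_lintegral_orthogonal_slices hv m
    (measurableSet_closedBall.inter measurableSet_closedBall)]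
  simp_rw [setOf_mem_closedBall_inter_closedBall_eq hv m (h_nonneg.trans h_le) h_nonneg]
  exact lintegral_addHaar_setOf_norm_sq_le volume h_nonneg h_le

theorem volume_closedBall_inter_closedBall [Nontrivial E] {x y : E} {ρ : ℝ} (hρ : 0 < ρ)
    (hxy : dist x y ≤ 2 * ρ) :
    volume (closedBall x ρ ∩ closedBall y ρ) =
      ENNReal.ofReal (regIncompleteBeta (1 - (dist x y / (2 * ρ)) ^ 2)
        (((finrank ℝ E : ℝ) + 1) / 2) (1 / 2)) * volume (closedBall x ρ) := by
  obtain ⟨v, hv, hv_smul⟩ := exists_norm_eq_one_and_norm_smul_eq (y - x)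
  rw [← dist_eq_norm, dist_comm] at hv_smul
  set h := dist x y / 2
  set m := x + h • v
  have h_nonneg : 0 ≤ h := by positivity
  have h_le : h ≤ ρ := by simp only [h]; linarith
  have hx : x = m - h • v := by simp only [m]; module
  have hy : y = m + h • v := by
    rw [sub_eq_iff_eq_add'.1 hv_smul.symm]; simp only [m, h]; module
  have h_finrank : ((finrank ℝ E : ℝ) + 1) / 2 = (finrank ℝ (ℝ ∙ v)ᗮ : ℝ) / 2 + 1 := by
    rw [← finrank_orthogonal_span_singleton_add_one (norm_ne_zero_iff.1 (hv ▸ one_ne_zero))]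
    push_cast
    ring
  have h_ball := volume_closedBall_inter_closedBall_eq_integral hv x le_rfl hρ.le
  rw [zero_smul, sub_zero, add_zero, inter_self] at h_ball
  have h_lens := volume_closedBall_inter_closedBall_eq_integral hv m h_nonneg h_le
  rw [← hx, ← hy] at h_lens
  set a := (finrank ℝ (ℝ ∙ v)ᗮ : ℝ) / 2
  have h_pos : 0 < 2 * ∫ u in (0 : ℝ)..ρ, (ρ ^ 2 - u ^ 2) ^ a :=
    ENNReal.ofReal_pos.1 <| pos_iff_ne_zero.2 <| left_ne_zero_of_mul <|
      h_ball ▸ (measure_closedBall_pos volume x hρ).ne'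
  rw [h_lens, h_ball, h_finrank, ← div_div, regIncompleteBeta_one_sub_div_sq a hρ h_nonneg h_le,
    ← mul_assoc, ← ENNReal.ofReal_mul' h_pos.le]
  congr 2
  have h_integral_pos := pos_of_mul_pos_right h_pos zero_le_two
  field_simp

theorem volume_unitBall_lens_dim_general [Nontrivial E] (x y : E) {ρ : ℝ} (hρ : 0 < ρ)
    (hxy : dist x y ≤ 2 * ρ) :
    volume (closedBall x ρ ∩ closedBall y ρ) =
      ENNReal.ofReal (ρ ^ finrank ℝ E *
        (π ^ ((finrank ℝ E : ℝ) / 2) / Real.Gamma ((finrank ℝ E : ℝ) / 2 + 1)) *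
        regIncompleteBeta (1 - (dist x y / (2 * ρ)) ^ 2) (((finrank ℝ E : ℝ) + 1) / 2)
          (1 / 2)) := by
  rw [volume_closedBall_inter_closedBall hρ hxy, InnerProductSpace.volume_closedBall,
    ← ENNReal.ofReal_pow hρ.le, ← ENNReal.ofReal_mul (by positivity),
    ← ENNReal.ofReal_mul' (by positivity), rpow_div_two_eq_sqrt _ pi_pos.le, rpow_natCast,
    mul_comm]

end InnerProductSpace

/-- For `d ≥ 1`, the Lebesgue volume of the intersection of two closed unit
balls in `d`-dimensional Euclidean space whose centres are at distance `r ∈ [0,2]` equals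
`(π^{d/2}/Γ(d/2 + 1))·I_{1 − r²/4}((d+1)/2, 1/2)`. -/
theorem volume_unitBall_lens_dim (d : ℕ) (hd : 1 ≤ d) (x y : EuclideanSpace ℝ (Fin d))
    (r : ℝ) (hr0 : 0 ≤ r) (hr2 : r ≤ 2) (hxy : dist x y = r) :
    volume (Metric.closedBall x 1 ∩ Metric.closedBall y 1) =
      ENNReal.ofReal (π ^ ((d : ℝ) / 2) / Real.Gamma ((d : ℝ) / 2 + 1) *
        regIncompleteBeta (1 - r ^ 2 / 4) (((d : ℝ) + 1) / 2) (1 / 2)) := by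
  have : NeZero d := ⟨by omega⟩
  have h_sq : (r / 2) ^ 2 = r ^ 2 / 4 := by ring
  simpa [hxy, h_sq] using volume_unitBall_lens_dim_general x y one_pos (by simpa [hxy])
end

section
/- Let d ≥ 1 and for r ∈ [0,2] let V_d(r) denote the Lebesgue volume of the intersection of two closed unit balls in d-dimensional Euclidean space whose centres are at distance r. Then V_d(r)/(2 − r)^{(d+1)/2} tends to π^{(d−1)/2}/Γ((d+3)/2) as r tends to 2 from below; that is, V_d(r) = (π^{(d−1)/2}/Γ((d+3)/2))·(2 − r)^{(d+1)/2} + O((2 − r)^{(d+3)/2}) as r → 2⁻. -/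
open MeasureTheory Real Filter Asymptotics Topology

/-- `lensVolume d hd r` is the Lebesgue volume of the intersection of two closed unit balls in
`d`-dimensional Euclidean space (`d ≥ 1`) whose centres are at distance `r` (for `r ≥ 0`). -/
noncomputable def lensVolume (d : ℕ) (hd : 0 < d) (r : ℝ) : ℝ :=
  (volume (Metric.closedBall (0 : EuclideanSpace ℝ (Fin d)) 1 ∩
    Metric.closedBall (EuclideanSpace.single (⟨0, hd⟩ : Fin d) r) 1)).toReal

/-!
The perpendicular bisector of the two centres cuts the lens into two congruent caps of height
`ε = (2 - r) / 2`. The slice of the unit ball at depth `u` below the top of a cap is an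
`n`-dimensional ball of radius `√(u (2 - u))`, where `n = d - 1`, so by Fubini

`V_d(r) = 2 ωₙ ∫₀^ε u^(n/2) (2 - u)^(n/2) du`, with `ωₙ = π^(n/2) / Γ(n/2 + 1)`.

As in Watson's lemma, only the value at `u = 0` of the smooth factor `(2 - u)^(n/2)` matters to
leading order, and replacing the factor by this value costs one further power of `ε`.
-/

section Integral

variable {E : Type*} [NormedAddCommGroup E] [NormedSpace ℝ E] {a : ℝ}

theorem isBigO_intervalIntegral_of_isBigO_rpow {f : ℝ → E} (ha : -1 < a)
    (hf : f =O[𝓝[>] 0] fun u => u ^ a) :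
    (fun ε => ∫ u in (0 : ℝ)..ε, f u) =O[𝓝[>] 0] fun ε => ε ^ (a + 1) := by
  obtain ⟨C, hC⟩ := hf.bound
  obtain ⟨δ, hδ, hbound⟩ := mem_nhdsGT_iff_exists_Ioc_subset.mp hC
  refine .of_bound (C / (a + 1)) ?_
  filter_upwards [Ioc_mem_nhdsGT hδ] with ε ⟨hε, hεδ⟩
  have hnorm : ∀ u ∈ Set.Ioc 0 ε, ‖f u‖ ≤ C * u ^ a := fun u hu => by
    simpa [abs_of_nonneg (rpow_nonneg hu.1.le a)] using hbound ⟨hu.1, hu.2.trans hεδ⟩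
  calc ‖∫ u in (0 : ℝ)..ε, f u‖
      ≤ ∫ u in (0 : ℝ)..ε, C * u ^ a :=
        intervalIntegral.norm_integral_le_of_norm_le hε.le (.of_forall hnorm)
          ((intervalIntegral.intervalIntegrable_rpow' ha).const_mul C)
    _ = C / (a + 1) * ‖ε ^ (a + 1)‖ := by
        rw [intervalIntegral.integral_const_mul, integral_rpow (.inl ha),
          zero_rpow (by linarith), norm_of_nonneg (rpow_nonneg hε.le _)]
        ring

theorem isBigO_intervalIntegral_rpow_smul_sub [CompleteSpace E] {φ : ℝ → E} (ha : -1 < a)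
    (hφ : Continuous φ) (hφ₀ : DifferentiableAt ℝ φ 0) :
    (fun ε => (∫ u in (0 : ℝ)..ε, u ^ a • φ u) - (ε ^ (a + 1) / (a + 1)) • φ 0)
      =O[𝓝[>] 0] fun ε => ε ^ (a + 2) := by
  have hrem : (fun u => u ^ a • (φ u - φ 0)) =O[𝓝[>] 0] fun u => u ^ (a + 1) := by
    have hsub : (fun u => φ u - φ 0) =O[𝓝[>] 0] fun u => u := by
      simpa using hφ₀.isBigO_sub.mono nhdsWithin_le_nhds
    refine ((isBigO_refl (fun u : ℝ => u ^ a) _).smul hsub).congr' .rfl ?_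
    filter_upwards [self_mem_nhdsWithin] with u hu
    exact (rpow_add_one (ne_of_gt hu) a).symm
  have hsplit (ε : ℝ) : (∫ u in (0 : ℝ)..ε, u ^ a • φ u) - (ε ^ (a + 1) / (a + 1)) • φ 0 =
      ∫ u in (0 : ℝ)..ε, u ^ a • (φ u - φ 0) := by
    have hpow : IntervalIntegrable (fun u : ℝ => u ^ a) volume 0 ε :=
      intervalIntegral.intervalIntegrable_rpow' ha
    simp only [smul_sub]
    rw [intervalIntegral.integral_sub (hpow.smul_continuousOn hφ.continuousOn)
      (hpow.smul_continuousOn continuousOn_const), intervalIntegral.integral_smul_const,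
      integral_rpow (.inl ha), zero_rpow (by linarith), sub_zero]
  simpa only [hsplit, add_assoc, one_add_one_eq_two] using
    isBigO_intervalIntegral_of_isBigO_rpow (by linarith) hrem

end Integral

theorem tendsto_div_rpow_of_isBigO_sub {α : Type*} {l : Filter α} {f x : α → ℝ} {a b c : ℝ}
    (hx : Tendsto x l (𝓝[>] 0)) (hab : a < b)
    (h : (fun t => f t - c * x t ^ a) =O[l] fun t => x t ^ b) :
    Tendsto (fun t => f t / x t ^ a) l (𝓝 c) := by
  have hpos : ∀ᶠ t in l, 0 < x t := hx.eventually self_mem_nhdsWithin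
  have hsmall : Tendsto (fun t => x t ^ (b - a)) l (𝓝 0) := by
    have hcont : ContinuousAt (fun u : ℝ => u ^ (b - a)) 0 :=
      continuousAt_rpow_const _ _ (.inr (sub_nonneg.mpr hab.le))
    simpa [Function.comp_def, zero_rpow (sub_pos.mpr hab).ne'] using
      hcont.tendsto.comp (tendsto_nhds_of_tendsto_nhdsWithin hx)
  have hquot : (fun t => f t / x t ^ a - c) =O[l] fun t => x t ^ (b - a) := by
    refine (h.mul (isBigO_refl (fun t => (x t ^ a)⁻¹) l)).congr' ?_ ?_
    · filter_upwards [hpos] with t ht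
      have := rpow_pos_of_pos ht a
      field_simp
    · filter_upwards [hpos] with t ht
      rw [rpow_sub ht, div_eq_mul_inv]
  exact tendsto_sub_nhds_zero_iff.mp (hquot.trans_tendsto hsmall)

/-- The point reflection `x ↦ p + q - x` exchanges the two halves into which the perpendicular
bisector of `p` and `q` cuts the lens. -/
theorem measure_closedBall_inter_closedBall {E : Type*} [NormedAddCommGroup E]
    [InnerProductSpace ℝ E] [FiniteDimensional ℝ E] [MeasurableSpace E] [BorelSpace E]
    (μ : Measure E) [μ.IsAddHaarMeasure] {p q : E} (hpq : p ≠ q) (R : ℝ) :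
    μ (Metric.closedBall p R ∩ Metric.closedBall q R) =
      2 * μ (Metric.closedBall p R ∩ {x | dist x q ≤ dist x p}) := by
  set A := Metric.closedBall p R ∩ {x | dist x q ≤ dist x p}
  set B := Metric.closedBall q R ∩ {x | dist x p ≤ dist x q}
  have hA : MeasurableSet A := Metric.isClosed_closedBall.measurableSet.inter
    (isClosed_le (by fun_prop) (by fun_prop)).measurableSet
  have hunion : Metric.closedBall p R ∩ Metric.closedBall q R = A ∪ B := by
    ext x
    simp only [A, B, Set.mem_inter_iff, Set.mem_union, Metric.mem_closedBall, Set.mem_ofPred_eq]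
    grind
  have hB : (fun x => p + q - x) ⁻¹' A = B := by
    ext x
    have hp : dist (p + q - x) p = dist x q := by
      rw [dist_comm x q, dist_eq_norm, dist_eq_norm]; congr 1; abel
    have hq : dist (p + q - x) q = dist x p := by
      rw [dist_comm x p, dist_eq_norm, dist_eq_norm]; congr 1; abel
    simp only [A, B, Set.mem_preimage, Set.mem_inter_iff, Metric.mem_closedBall, Set.mem_ofPred_eq,
      hp, hq]
  have hdisj : AEDisjoint μ A B :=
    measure_mono_null
      (fun x hx => AffineSubspace.mem_perpBisector_iff_dist_eq.mpr (hx.2.2.antisymm hx.1.2))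
      (Measure.addHaar_affineSubspace μ (AffineSubspace.perpBisector p q) (by simpa using hpq))
  have hμB : μ B = μ A := by
    rw [← hB, (Measure.measurePreserving_sub_left μ (p + q)).measure_preimage hA.nullMeasurableSet]
  rw [hunion, measure_union₀' hA.nullMeasurableSet hdisj, hμB, two_mul]

theorem volume_real_closedBall_euclideanSpace {ι : Type*} [Fintype ι] (x : EuclideanSpace ℝ ι)
    {R : ℝ} (hR : 0 ≤ R) :
    volume.real (Metric.closedBall x R) =
      π ^ ((Fintype.card ι : ℝ) / 2) / Gamma (Fintype.card ι / 2 + 1) * R ^ Fintype.card ι := by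
  rcases isEmpty_or_nonempty ι with hι | hι
  · simp [measureReal_def, volume_euclideanSpace_eq_dirac, Subsingleton.elim x 0, hR]
  · have hΓ : 0 < Gamma ((Fintype.card ι : ℝ) / 2 + 1) := Gamma_pos_of_pos (by positivity)
    rw [measureReal_def, EuclideanSpace.volume_closedBall, ENNReal.toReal_mul, ENNReal.toReal_pow,
      ENNReal.toReal_ofReal hR, ENNReal.toReal_ofReal (div_nonneg (by positivity) hΓ.le),
      rpow_div_two_eq_sqrt _ pi_nonneg, rpow_natCast, mul_comm]

/-- The point of `ℝⁿ⁺¹` with `i`-th coordinate `t` and remaining coordinates `y`, which places `y`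
in the hyperplane slice `x i = t`. -/
noncomputable def insertCoord {n : ℕ} (i : Fin (n + 1)) (t : ℝ) (y : EuclideanSpace ℝ (Fin n)) :
    EuclideanSpace ℝ (Fin (n + 1)) :=
  WithLp.toLp 2 (i.insertNth t y.ofLp)

theorem volume_eq_lintegral_volume_insertCoord {n : ℕ} (i : Fin (n + 1))
    {S : Set (EuclideanSpace ℝ (Fin (n + 1)))} (hS : MeasurableSet S) :
    volume S = ∫⁻ t, volume {y | insertCoord i t y ∈ S} := by
  have hpres := (PiLp.volume_preserving_toLp (Fin (n + 1))).comp
    ((volume_preserving_piFinSuccAbove (fun _ => ℝ) i).symm)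
  rw [← hpres.measure_preimage hS.nullMeasurableSet, Measure.volume_eq_prod,
    Measure.prod_apply (hpres.measurable hS)]
  refine lintegral_congr fun t => ?_
  rw [← (PiLp.volume_preserving_ofLp (Fin n)).measure_preimage]
  · rfl
  · exact (measurable_prodMk_left (hpres.measurable hS)).nullMeasurableSet

theorem insertCoord_apply_same {n : ℕ} (i : Fin (n + 1)) (t : ℝ) (y : EuclideanSpace ℝ (Fin n)) :
    insertCoord i t y i = t := by
  simp [insertCoord]

theorem norm_insertCoord_sq {n : ℕ} (i : Fin (n + 1)) (t : ℝ) (y : EuclideanSpace ℝ (Fin n)) :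
    ‖insertCoord i t y‖ ^ 2 = t ^ 2 + ‖y‖ ^ 2 := by
  simp [insertCoord, EuclideanSpace.real_norm_sq_eq, Fin.sum_univ_succAbove _ i]

/-- The cap of height `R - h` cut from the closed ball of radius `R` about the origin by the
half-space `h ≤ x i`. -/
def ballCap {ι : Type*} [Fintype ι] (i : ι) (R h : ℝ) : Set (EuclideanSpace ℝ ι) :=
  Metric.closedBall 0 R ∩ {x | h ≤ x i}

namespace ballCap

theorem measurableSet {ι : Type*} [Fintype ι] (i : ι) (R h : ℝ) : MeasurableSet (ballCap i R h) :=
  (Metric.isClosed_closedBall.inter (isClosed_le (by fun_prop) (by fun_prop))).measurableSet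

variable {n : ℕ} (i : Fin (n + 1)) {R h : ℝ}

theorem insertCoord_mem_iff (hh : -R ≤ h) {t : ℝ} {y : EuclideanSpace ℝ (Fin n)} :
    insertCoord i t y ∈ ballCap i R h ↔
      t ∈ Set.Icc h R ∧ y ∈ Metric.closedBall 0 √(R ^ 2 - t ^ 2) := by
  simp only [ballCap, Set.mem_inter_iff, mem_closedBall_zero_iff, Set.mem_ofPred_eq,
    insertCoord_apply_same, Set.mem_Icc]
  have hnorm : ‖insertCoord i t y‖ ≤ R ↔ 0 ≤ R ∧ t ^ 2 + ‖y‖ ^ 2 ≤ R ^ 2 := by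
    rw [← norm_insertCoord_sq i]
    exact ⟨fun H => ⟨(norm_nonneg _).trans H, by gcongr⟩,
      fun H => (pow_le_pow_iff_left₀ (norm_nonneg _) H.1 two_ne_zero).mp H.2⟩
  rw [hnorm]
  constructor
  · rintro ⟨⟨hR, hsq⟩, ht⟩
    refine ⟨⟨ht, ?_⟩, le_sqrt_of_sq_le (by linarith)⟩
    exact le_of_sq_le_sq (by linarith [sq_nonneg ‖y‖]) hR
  · rintro ⟨⟨ht, htR⟩, hy⟩
    have htsq : t ^ 2 ≤ R ^ 2 := sq_le_sq.mpr (abs_le_abs htR (by linarith))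
    rw [le_sqrt (norm_nonneg _) (by linarith)] at hy
    exact ⟨⟨by linarith, by linarith⟩, ht⟩

theorem volume_real_eq_integral_sqrt (hh : -R ≤ h) (hhR : h ≤ R) :
    volume.real (ballCap i R h) =
      π ^ ((n : ℝ) / 2) / Gamma (n / 2 + 1) * ∫ t in h..R, √(R ^ 2 - t ^ 2) ^ n := by
  set ω := π ^ ((n : ℝ) / 2) / Gamma ((n : ℝ) / 2 + 1)
  have hω : 0 ≤ ω := div_nonneg (by positivity) (Gamma_pos_of_pos (by positivity)).le
  have hslice (t : ℝ) : volume {y | insertCoord i t y ∈ ballCap i R h} =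
      (Set.Icc h R).indicator (fun t => ENNReal.ofReal (ω * √(R ^ 2 - t ^ 2) ^ n)) t := by
    simp only [insertCoord_mem_iff i hh]
    by_cases ht : t ∈ Set.Icc h R
    · simp only [ht, true_and, Set.indicator_of_mem]
      have hball := volume_real_closedBall_euclideanSpace (0 : EuclideanSpace ℝ (Fin n))
        (sqrt_nonneg (R ^ 2 - t ^ 2))
      rw [Fintype.card_fin] at hball
      rw [← hball, ofReal_measureReal measure_closedBall_lt_top.ne, Set.ofPred_mem_eq]
    · simp [ht]
  have hint : IntegrableOn (fun t => ω * √(R ^ 2 - t ^ 2) ^ n) (Set.Icc h R) :=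
    Continuous.integrableOn_Icc (by fun_prop)
  have hnonneg (t : ℝ) : 0 ≤ ω * √(R ^ 2 - t ^ 2) ^ n := mul_nonneg hω (by positivity)
  rw [measureReal_def, volume_eq_lintegral_volume_insertCoord i (measurableSet i R h),
    lintegral_congr hslice, lintegral_indicator measurableSet_Icc,
    ← ofReal_integral_eq_lintegral_ofReal hint (.of_forall hnonneg),
    ENNReal.toReal_ofReal (integral_nonneg hnonneg),
    integral_Icc_eq_integral_Ioc, ← intervalIntegral.integral_of_le hhR,
    intervalIntegral.integral_const_mul]

theorem volume_real_sub_eq_integral_rpow {ε : ℝ} (hε : 0 ≤ ε) (hεR : ε ≤ 2 * R) :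
    volume.real (ballCap i R (R - ε)) = π ^ ((n : ℝ) / 2) / Gamma (n / 2 + 1) *
      ∫ u in (0 : ℝ)..ε, u ^ ((n : ℝ) / 2) * (2 * R - u) ^ ((n : ℝ) / 2) := by
  rw [volume_real_eq_integral_sqrt i (by linarith) (by linarith)]
  congr 1
  calc ∫ t in (R - ε)..R, √(R ^ 2 - t ^ 2) ^ n
      = ∫ u in (0 : ℝ)..ε, √(R ^ 2 - (R - u) ^ 2) ^ n := by
        rw [intervalIntegral.integral_comp_sub_left (fun t => √(R ^ 2 - t ^ 2) ^ n), sub_zero]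
    _ = ∫ u in (0 : ℝ)..ε, u ^ ((n : ℝ) / 2) * (2 * R - u) ^ ((n : ℝ) / 2) := by
        refine intervalIntegral.integral_congr fun u hu => ?_
        rw [Set.uIcc_of_le hε] at hu
        have hu₀ : 0 ≤ u := hu.1
        have hu₁ : 0 ≤ 2 * R - u := by linarith [hu.2]
        rw [← mul_rpow hu₀ hu₁, rpow_div_two_eq_sqrt _ (mul_nonneg hu₀ hu₁), rpow_natCast]
        ring_nf

theorem isBigO_volume_real_sub (hR : 0 < R) :
    (fun ε => volume.real (ballCap i R (R - ε)) -
        π ^ ((n : ℝ) / 2) / Gamma (n / 2 + 2) * (2 * R) ^ ((n : ℝ) / 2) * ε ^ ((n : ℝ) / 2 + 1))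
      =O[𝓝[>] 0] fun ε => ε ^ ((n : ℝ) / 2 + 2) := by
  have hn : (0 : ℝ) ≤ n / 2 := by positivity
  have hcont : Continuous fun u : ℝ => (2 * R - u) ^ ((n : ℝ) / 2) :=
    (by fun_prop : Continuous fun u => 2 * R - u).rpow_const fun _ => .inr hn
  have hdiff : DifferentiableAt ℝ (fun u : ℝ => (2 * R - u) ^ ((n : ℝ) / 2)) 0 :=
    (by fun_prop : DifferentiableAt ℝ (fun u => 2 * R - u) 0).rpow_const
      (.inl (by simpa using hR.ne'))
  refine ((isBigO_intervalIntegral_rpow_smul_sub (by linarith) hcont hdiff).const_mul_left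
    (π ^ ((n : ℝ) / 2) / Gamma (n / 2 + 1))).congr' ?_ .rfl
  filter_upwards [Ioc_mem_nhdsGT (show 0 < 2 * R by positivity)] with ε ⟨hε, hεR⟩
  have hΓ : Gamma ((n : ℝ) / 2 + 2) = (n / 2 + 1) * Gamma (n / 2 + 1) := by
    rw [← Gamma_add_one (by positivity)]
    ring_nf
  simp only [volume_real_sub_eq_integral_rpow i hε.le hεR, hΓ, smul_eq_mul, sub_zero]
  field_simp

end ballCap

theorem volume_closedBall_inter_closedBall_single {ι : Type*} [Fintype ι] [DecidableEq ι] (i : ι)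
    (R : ℝ) {r : ℝ} (hr : 0 < r) :
    volume (Metric.closedBall 0 R ∩ Metric.closedBall (EuclideanSpace.single i r) R) =
      2 * volume (ballCap i R (r / 2)) := by
  have hcap : Metric.closedBall (0 : EuclideanSpace ℝ ι) R ∩
      {x | dist x (EuclideanSpace.single i r) ≤ dist x 0} = ballCap i R (r / 2) := by
    refine congrArg _ (Set.ext fun x => ?_)
    have hdist : dist x (EuclideanSpace.single i r) ^ 2 = dist x 0 ^ 2 - 2 * r * (x i - r / 2) := by
      rw [dist_eq_norm, norm_sub_sq_real, EuclideanSpace.inner_single_right, dist_zero_right,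
        PiLp.norm_single, norm_of_nonneg hr.le, conj_trivial]
      ring
    rw [Set.mem_ofPred_eq, Set.mem_ofPred_eq,
      ← pow_le_pow_iff_left₀ dist_nonneg dist_nonneg two_ne_zero, hdist,
      sub_le_self_iff, mul_nonneg_iff_of_pos_left (by positivity), sub_nonneg]
  have hne : (0 : EuclideanSpace ℝ ι) ≠ EuclideanSpace.single i r := by
    simpa [eq_comm] using hr.ne'
  rw [measure_closedBall_inter_closedBall volume hne, hcap]

theorem lensVolume_eq_two_mul_volume_real_ballCap {d : ℕ} (hd : 0 < d) {r : ℝ} (hr : 0 < r) :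
    lensVolume d hd r = 2 * volume.real (ballCap (⟨0, hd⟩ : Fin d) 1 (r / 2)) := by
  rw [lensVolume, volume_closedBall_inter_closedBall_single _ _ hr, ENNReal.toReal_mul,
    ENNReal.toReal_ofNat, measureReal_def]

theorem isBigO_lensVolume_sub (n : ℕ) (hd : 0 < n + 1) :
    (fun r => lensVolume (n + 1) hd r -
        π ^ ((n : ℝ) / 2) / Gamma (n / 2 + 2) * (2 - r) ^ ((n : ℝ) / 2 + 1))
      =O[𝓝[<] 2] fun r => (2 - r) ^ ((n : ℝ) / 2 + 2) := by
  have hheight : Tendsto (fun r : ℝ => (2 - r) / 2) (𝓝[<] 2) (𝓝[>] 0) := by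
    refine tendsto_nhdsWithin_iff.mpr ⟨?_, ?_⟩
    · exact (Continuous.tendsto' (by fun_prop) _ _ (by simp)).mono_left nhdsWithin_le_nhds
    · filter_upwards [self_mem_nhdsWithin] with r (hr : r < 2)
      exact half_pos (sub_pos.mpr hr)
  have hcap := ((ballCap.isBigO_volume_real_sub (⟨0, hd⟩ : Fin (n + 1)) one_pos).comp_tendsto
    hheight).const_mul_left 2
  refine (hcap.congr' ?_ ?_).trans (isBigO_const_mul_self (1 / 2 ^ ((n : ℝ) / 2 + 2)) _ _)
  · filter_upwards [Ioo_mem_nhdsLT (two_pos : (0 : ℝ) < 2)] with r hr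
    have hpow : 2 * (2 ^ ((n : ℝ) / 2) * ((2 - r) / 2) ^ ((n : ℝ) / 2 + 1)) =
        (2 - r) ^ ((n : ℝ) / 2 + 1) := by
      rw [div_rpow (sub_pos.mpr hr.2).le two_pos.le, rpow_add_one two_ne_zero]
      field_simp
    have hcut : 1 - (2 - r) / 2 = r / 2 := by ring
    rw [Function.comp_apply, mul_one, lensVolume_eq_two_mul_volume_real_ballCap hd hr.1, hcut,
      ← hpow]
    ring
  · filter_upwards [self_mem_nhdsWithin] with r hr
    rw [Function.comp_apply, div_rpow (sub_pos.mpr hr).le two_pos.le]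
    ring

/-- For `d ≥ 1`, `V_d(r)/(2 − r)^{(d+1)/2} → π^{(d−1)/2}/Γ((d+3)/2)` as
`r → 2⁻`; that is, `V_d(r) = (π^{(d−1)/2}/Γ((d+3)/2))·(2 − r)^{(d+1)/2} + O((2 − r)^{(d+3)/2})`
as `r → 2⁻`. -/
theorem lensVolume_asymptotics (d : ℕ) (hd : 0 < d) :
    Tendsto (fun r : ℝ => lensVolume d hd r / (2 - r) ^ (((d : ℝ) + 1) / 2)) (𝓝[<] 2)
      (𝓝 (π ^ (((d : ℝ) - 1) / 2) / Real.Gamma (((d : ℝ) + 3) / 2))) ∧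
    (fun r : ℝ =>
        lensVolume d hd r -
          π ^ (((d : ℝ) - 1) / 2) / Real.Gamma (((d : ℝ) + 3) / 2) *
            (2 - r) ^ (((d : ℝ) + 1) / 2))
      =O[𝓝[<] 2] (fun r : ℝ => (2 - r) ^ (((d : ℝ) + 3) / 2)) := by
  obtain ⟨n, rfl⟩ : ∃ n, d = n + 1 := Nat.exists_eq_succ_of_ne_zero hd.ne'
  have hsub : (((n + 1 : ℕ) : ℝ) - 1) / 2 = n / 2 := by push_cast; ring
  have hone : (((n + 1 : ℕ) : ℝ) + 1) / 2 = n / 2 + 1 := by push_cast; ring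
  have hthree : (((n + 1 : ℕ) : ℝ) + 3) / 2 = n / 2 + 2 := by push_cast; ring
  rw [hsub, hone, hthree]
  have hgap : Tendsto (fun r : ℝ => 2 - r) (𝓝[<] 2) (𝓝[>] 0) := by
    rw [Tendsto, map_subLeft_nhdsLT, sub_self]
  have hO := isBigO_lensVolume_sub n hd
  exact ⟨tendsto_div_rpow_of_isBigO_sub hgap (by linarith) hO, hO⟩
end

section
/- Let y be a point of the Euclidean plane ℝ² with ‖y‖ = r where r ≥ 1, and let λ satisfy r − 1 < λ < r + 1 and λ > 0. Then the one-dimensional Hausdorff measure of the set of points on the circle of radius λ centred at the origin that lie strictly within distance 1 of y equals 2λ·arccos((λ² + r² − 1)/(2rλ)). -/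
open MeasureTheory Real
open scoped NNReal ENNReal Topology

/-!
Rotate the plane so that `y` lies on the positive real axis of `ℂ`. By the law of cosines, the point
of the circle at angle `t ∈ (-π, π]` lies in the disk exactly when `cos t` exceeds the argument of
the arccosine, which up to endpoints means `|t| < arccos _`. Arc length is then computed from a
weak form of the area formula: an injective map whose derivative multiplies all norms by `v`
multiplies `d`-dimensional Hausdorff measure by `v ^ d`. Indeed, the domain splits into countably
many measurable pieces on each of which the map is as close as desired to a linear one, hence
bi-Lipschitz with constants close to `v`.
-/

section AreaFormula

variable {E F : Type*} [NormedAddCommGroup E] [NormedSpace ℝ E] [MeasurableSpace E] [BorelSpace E]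
  [NormedAddCommGroup F] [NormedSpace ℝ F] {f : E → F} {s : Set E} {d : ℝ} {v : ℝ≥0}

theorem exists_partition_approximatesLinearOn [FiniteDimensional ℝ E] [SecondCountableTopology F]
    {f' : E → E →L[ℝ] F} (hs : MeasurableSet s) (hne : s.Nonempty)
    (hf : ∀ x ∈ s, HasFDerivWithinAt f (f' x) s x) {ε : ℝ≥0} (hε : 0 < ε) :
    ∃ u : ℕ → Set E, (∀ n, MeasurableSet (u n)) ∧ Pairwise (Function.onFun Disjoint u) ∧
      ⋃ n, u n = s ∧ ∀ n, ∃ x ∈ s, ApproximatesLinearOn f (f' x) (u n) ε := by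
  obtain ⟨t, A, hdisj, ht, hst, hfA, hA⟩ :=
    exists_partition_approximatesLinearOn_of_hasFDerivWithinAt f s f' hf (fun _ ↦ ε) fun _ ↦ hε.ne'
  refine ⟨fun n ↦ s ∩ t n, fun n ↦ hs.inter (ht n), fun i j hij ↦ ?_, ?_, fun n ↦ ?_⟩
  · exact (hdisj hij).mono Set.inter_subset_right Set.inter_subset_right
  · rw [← Set.inter_iUnion, Set.inter_eq_left.2 hst]
  · obtain ⟨x, hx, hAx⟩ := hA hne n
    exact ⟨x, hx, hAx ▸ hfA n⟩

theorem tendsto_coe_rpow_mul_const (hv : v ≠ 0) (a : ℝ≥0∞) :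
    Filter.Tendsto (fun k : ℝ≥0 ↦ (k : ℝ≥0∞) ^ d * a) (𝓝 v) (𝓝 ((v : ℝ≥0∞) ^ d * a)) := by
  refine ENNReal.Tendsto.mul_const ?_ (.inl ?_)
  · exact (ENNReal.continuous_rpow_const.comp ENNReal.continuous_coe).tendsto v
  · simp [hv]

variable [MeasurableSpace F] [BorelSpace F]

theorem hausdorffMeasure_image_le_of_approximatesLinearOn {A : E →L[ℝ] F} {ε : ℝ≥0}
    (hf : ApproximatesLinearOn f A s ε) (hA : ‖A‖₊ ≤ v) (hd : 0 ≤ d) :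
    μH[d] (f '' s) ≤ ((v + ε : ℝ≥0) : ℝ≥0∞) ^ d * μH[d] s := by
  have hlip : LipschitzOnWith (v + ε) f s :=
    lipschitzOnWith_iff_restrict.2 (hf.lipschitz.weaken (by gcongr))
  exact hlip.hausdorffMeasure_image_le hd

theorem le_hausdorffMeasure_image_of_approximatesLinearOn {A : E →L[ℝ] F} {ε : ℝ≥0}
    (hf : ApproximatesLinearOn f A s ε) (hA : AntilipschitzWith v⁻¹ A) (hε : ε < v) (hd : 0 ≤ d) :
    ((v - ε : ℝ≥0) : ℝ≥0∞) ^ d * μH[d] s ≤ μH[d] (f '' s) := by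
  have hanti : AntilipschitzWith (v - ε)⁻¹ (s.domRestrict f) := by
    have := (hA.domRestrict s).add_lipschitzWith hf.lipschitz_sub (by rwa [inv_inv])
    simpa using! this
  have hμ : μH[d] s ≤ ((v - ε)⁻¹ : ℝ≥0) ^ d * μH[d] (f '' s) := by
    have := hanti.le_hausdorffMeasure_image hd Set.univ
    rwa [← isometry_subtype_coe.hausdorffMeasure_image (.inl hd), Set.image_univ,
      Subtype.range_coe, Set.image_univ, Set.range_domRestrict] at this
  have hpos : v - ε ≠ 0 := (tsub_pos_of_lt hε).ne'
  rwa [ENNReal.coe_inv hpos, ENNReal.inv_rpow,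
    ← ENNReal.mul_le_iff_le_inv (by simp [hpos, -ENNReal.coe_sub]) (by simp [hd])] at hμ

variable [FiniteDimensional ℝ E] [SecondCountableTopology F] {f' : E → E →L[ℝ] F}

theorem hausdorffMeasure_image_le_of_nnnorm_hasFDerivWithinAt_le (hs : MeasurableSet s)
    (hf : ∀ x ∈ s, HasFDerivWithinAt f (f' x) s x) (hf' : ∀ x ∈ s, ‖f' x‖₊ ≤ v) (hv : v ≠ 0)
    (hd : 0 ≤ d) :
    μH[d] (f '' s) ≤ (v : ℝ≥0∞) ^ d * μH[d] s := by
  obtain rfl | hne := s.eq_empty_or_nonempty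
  · simp
  suffices h : ∀ k > v, μH[d] (f '' s) ≤ (k : ℝ≥0∞) ^ d * μH[d] s from
    ge_of_tendsto ((tendsto_coe_rpow_mul_const hv _).mono_left nhdsWithin_le_nhds)
      (eventually_nhdsWithin_of_forall h : ∀ᶠ k in 𝓝[>] v, _)
  intro k hk
  obtain ⟨u, hu, hdisj, rfl, hfu⟩ :=
    exists_partition_approximatesLinearOn hs hne hf (tsub_pos_of_lt hk)
  have hpiece (n : ℕ) : μH[d] (f '' u n) ≤ (k : ℝ≥0∞) ^ d * μH[d] (u n) := by
    obtain ⟨x, hx, hfx⟩ := hfu n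
    have := hausdorffMeasure_image_le_of_approximatesLinearOn hfx (hf' x hx) hd
    rwa [add_tsub_cancel_of_le hk.le] at this
  calc μH[d] (f '' ⋃ n, u n) = μH[d] (⋃ n, f '' u n) := by rw [Set.image_iUnion]
    _ ≤ ∑' n, μH[d] (f '' u n) := measure_iUnion_le _
    _ ≤ ∑' n, (k : ℝ≥0∞) ^ d * μH[d] (u n) := ENNReal.tsum_le_tsum hpiece
    _ = (k : ℝ≥0∞) ^ d * μH[d] (⋃ n, u n) := by rw [ENNReal.tsum_mul_left, measure_iUnion hdisj hu]

theorem le_hausdorffMeasure_image_of_antilipschitzWith_hasFDerivWithinAt (hs : MeasurableSet s)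
    (hf : ∀ x ∈ s, HasFDerivWithinAt f (f' x) s x) (hf' : ∀ x ∈ s, AntilipschitzWith v⁻¹ (f' x))
    (hv : v ≠ 0) (hinj : s.InjOn f) (hd : 0 ≤ d) :
    (v : ℝ≥0∞) ^ d * μH[d] s ≤ μH[d] (f '' s) := by
  obtain rfl | hne := s.eq_empty_or_nonempty
  · simp
  have hv_pos : 0 < v := pos_iff_ne_zero.2 hv
  have : (𝓝[<] v).NeBot := nhdsLT_neBot_of_exists_lt ⟨0, hv_pos⟩
  suffices h : ∀ k ∈ Set.Ioo 0 v, (k : ℝ≥0∞) ^ d * μH[d] s ≤ μH[d] (f '' s) from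
    le_of_tendsto ((tendsto_coe_rpow_mul_const hv _).mono_left nhdsWithin_le_nhds)
      (Filter.mem_of_superset (Ioo_mem_nhdsLT hv_pos) h)
  rintro k ⟨hk, hkv⟩
  obtain ⟨u, hu, hdisj, rfl, hfu⟩ :=
    exists_partition_approximatesLinearOn hs hne hf (tsub_pos_of_lt hkv)
  have hpiece (n : ℕ) : (k : ℝ≥0∞) ^ d * μH[d] (u n) ≤ μH[d] (f '' u n) := by
    obtain ⟨x, hx, hfx⟩ := hfu n
    have := le_hausdorffMeasure_image_of_approximatesLinearOn hfx (hf' x hx)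
      (tsub_lt_self hv_pos hk) hd
    rwa [tsub_tsub_cancel_of_le hkv.le] at this
  have hmeas (n : ℕ) : MeasurableSet (f '' u n) := by
    obtain ⟨x, -, hfx⟩ := hfu n
    exact (hu n).image_of_continuousOn_injOn hfx.continuousOn
      (hinj.mono (Set.subset_iUnion u n))
  have hdisj_image : Pairwise (Function.onFun Disjoint fun n ↦ f '' u n) := fun i j hij ↦
    Set.disjoint_image_image fun _ hx _ hy hxy ↦ (hdisj hij).ne_of_mem hx hy <|
      hinj (Set.mem_iUnion_of_mem i hx) (Set.mem_iUnion_of_mem j hy) hxy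
  calc (k : ℝ≥0∞) ^ d * μH[d] (⋃ n, u n) = ∑' n, (k : ℝ≥0∞) ^ d * μH[d] (u n) := by
        rw [measure_iUnion hdisj hu, ENNReal.tsum_mul_left]
    _ ≤ ∑' n, μH[d] (f '' u n) := ENNReal.tsum_le_tsum hpiece
    _ = μH[d] (f '' ⋃ n, u n) := by rw [← measure_iUnion hdisj_image hmeas, Set.image_iUnion]

theorem hausdorffMeasure_image_of_norm_hasFDerivWithinAt_eq (hs : MeasurableSet s)
    (hf : ∀ x ∈ s, HasFDerivWithinAt f (f' x) s x) (hf' : ∀ x ∈ s, ∀ w, ‖f' x w‖ = v * ‖w‖)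
    (hv : v ≠ 0) (hinj : s.InjOn f) (hd : 0 ≤ d) :
    μH[d] (f '' s) = (v : ℝ≥0∞) ^ d * μH[d] s := by
  refine le_antisymm ?_ ?_
  · exact hausdorffMeasure_image_le_of_nnnorm_hasFDerivWithinAt_le hs hf
      (fun x hx ↦ (f' x).opNorm_le_bound v.2 fun w ↦ (hf' x hx w).le) hv hd
  · refine le_hausdorffMeasure_image_of_antilipschitzWith_hasFDerivWithinAt hs hf
      (fun x hx ↦ AddMonoidHomClass.antilipschitz_of_bound _ fun w ↦ ?_) hv hinj hd
    rw [hf' x hx, NNReal.coe_inv, inv_mul_cancel_left₀ (NNReal.coe_ne_zero.2 hv)]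

end AreaFormula

theorem hausdorffMeasure_image_circleMap {c : ℂ} {R : ℝ} (hR : R ≠ 0) {s : Set ℝ}
    (hs : MeasurableSet s) (hinj : s.InjOn (circleMap c R)) :
    μH[1] (circleMap c R '' s) = ENNReal.ofReal |R| * volume s := by
  have := hausdorffMeasure_image_of_norm_hasFDerivWithinAt_eq (v := Real.nnabs R) hs
    (fun t _ ↦ (hasDerivAt_circleMap c R t).hasFDerivAt.hasFDerivWithinAt)
    (fun t _ w ↦ by simp [mul_comm]) (by simpa using hR) hinj zero_le_one
  rwa [ENNReal.rpow_one, hausdorffMeasure_real, ← ENNReal.ofReal_coe_nnreal, Real.coe_nnabs] at this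

theorem lt_cos_of_abs_lt_arccos {a t : ℝ} (ht : |t| < arccos a) : a < cos t := by
  by_contra! h
  have : arccos a ≤ arccos (cos |t|) := arccos_le_arccos (by rwa [cos_abs])
  rw [arccos_cos (abs_nonneg t) (ht.le.trans (arccos_le_pi a))] at this
  exact this.not_gt ht

theorem abs_le_arccos_of_le_cos {a t : ℝ} (ht : |t| ≤ π) (h : a ≤ cos t) : |t| ≤ arccos a := by
  rw [← arccos_cos (abs_nonneg t) ht, cos_abs]
  exact arccos_le_arccos h

theorem volume_Ioc_inter_setOf_lt_cos (a : ℝ) :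
    volume (Set.Ioc (-π) π ∩ {t | a < cos t}) = ENNReal.ofReal (2 * arccos a) := by
  have hlower : Set.Ioo (-arccos a) (arccos a) ⊆ Set.Ioc (-π) π ∩ {t | a < cos t} := fun t ht ↦
    ⟨⟨(neg_le_neg (arccos_le_pi a)).trans_lt ht.1, ht.2.le.trans (arccos_le_pi a)⟩,
      lt_cos_of_abs_lt_arccos (abs_lt.2 ht)⟩
  have hupper : Set.Ioc (-π) π ∩ {t | a < cos t} ⊆ Set.Icc (-arccos a) (arccos a) := fun t ht ↦
    abs_le.1 (abs_le_arccos_of_le_cos (abs_le.2 ⟨ht.1.1.le, ht.1.2⟩) ht.2.le)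
  have hlength : arccos a - -arccos a = 2 * arccos a := by ring
  refine le_antisymm ((measure_mono hupper).trans_eq ?_) (Eq.trans_le ?_ (measure_mono hlower))
  · rw [Real.volume_Icc, hlength]
  · rw [Real.volume_Ioo, hlength]

theorem dist_circleMap_zero_ofReal_sq (R d t : ℝ) :
    dist (circleMap 0 R t) d ^ 2 = R ^ 2 + d ^ 2 - 2 * d * R * cos t := by
  rw [Complex.dist_eq, Complex.sq_norm, Complex.normSq_apply, Complex.sub_re, Complex.sub_im,
    circleMap_zero_re, circleMap_zero_im, Complex.ofReal_re, Complex.ofReal_im]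
  linear_combination R ^ 2 * sin_sq_add_cos_sq t

theorem circleMap_zero_mem_ball_ofReal_iff {R d ρ t : ℝ} (hR : 0 < R) (hd : 0 < d) (hρ : 0 ≤ ρ) :
    circleMap 0 R t ∈ Metric.ball (d : ℂ) ρ ↔ (R ^ 2 + d ^ 2 - ρ ^ 2) / (2 * d * R) < cos t := by
  rw [Metric.mem_ball, ← sq_lt_sq₀ dist_nonneg hρ, dist_circleMap_zero_ofReal_sq,
    div_lt_iff₀ (by positivity), sub_lt_comm, mul_comm (cos t)]

theorem hausdorffMeasure_sphere_zero_inter_ball_ofReal {R d ρ : ℝ} (hR : 0 < R) (hd : 0 < d)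
    (hρ : 0 ≤ ρ) :
    μH[1] (Metric.sphere (0 : ℂ) R ∩ Metric.ball (d : ℂ) ρ) =
      ENNReal.ofReal (2 * R * arccos ((R ^ 2 + d ^ 2 - ρ ^ 2) / (2 * d * R))) := by
  have hsphere : circleMap 0 R '' Set.Ioc (-π) π = Metric.sphere 0 R := by
    have := (periodic_circleMap 0 R).image_Ioc two_pi_pos (-π)
    rwa [show -π + 2 * π = π by ring, range_circleMap, abs_of_pos hR] at this
  have hinj : (Set.Ioc (-π) π).InjOn (circleMap 0 R) := by
    rw [← Set.uIoc_of_le (neg_le_self pi_nonneg)]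
    exact injOn_circleMap_of_abs_sub_le hR.ne'
      (by rw [abs_sub_comm, abs_of_pos] <;> linarith [pi_pos])
  have hpreimage : circleMap 0 R ⁻¹' Metric.ball (d : ℂ) ρ =
      {t | (R ^ 2 + d ^ 2 - ρ ^ 2) / (2 * d * R) < cos t} :=
    Set.ext fun _ ↦ circleMap_zero_mem_ball_ofReal_iff hR hd hρ
  rw [← hsphere, ← Set.image_inter_preimage, hpreimage, hausdorffMeasure_image_circleMap hR.ne'
    (measurableSet_Ioc.inter (measurableSet_lt measurable_const measurable_cos))
    (hinj.mono Set.inter_subset_left), volume_Ioc_inter_setOf_lt_cos, abs_of_pos hR,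
    ← ENNReal.ofReal_mul hR.le, mul_left_comm, ← mul_assoc]

theorem exists_linearIsometryEquiv_complex_apply_eq_norm {V : Type*} [NormedAddCommGroup V]
    [InnerProductSpace ℝ V] (hV : Module.finrank ℝ V = 2) (v : V) :
    ∃ φ : V ≃ₗᵢ[ℝ] ℂ, φ v = ‖v‖ := by
  have : FiniteDimensional ℝ V := .of_finrank_pos (by simp [hV])
  let ψ : V ≃ₗᵢ[ℝ] ℂ :=
    (Complex.isometryOfOrthonormal ((stdOrthonormalBasis ℝ V).reindex (finCongr hV))).symm
  refine ⟨ψ.trans (rotation (Circle.exp (-(ψ v).arg))), ?_⟩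
  calc (Circle.exp (-(ψ v).arg) : ℂ) * ψ v
      = Circle.exp (-(ψ v).arg) * (‖ψ v‖ * Complex.exp ((ψ v).arg * Complex.I)) := by
        rw [Complex.norm_mul_exp_arg_mul_I]
    _ = ‖v‖ := by
        rw [Circle.coe_exp, mul_left_comm, ← Complex.exp_add, ψ.norm_map]
        simp

theorem arcLength_within_unit_disk_general {V P : Type*} [NormedAddCommGroup V]
    [InnerProductSpace ℝ V] [MetricSpace P] [NormedAddTorsor V P] [MeasurableSpace P] [BorelSpace P]
    (hV : Module.finrank ℝ V = 2) {x y : P} (hxy : x ≠ y) {R ρ : ℝ} (hR : 0 < R) (hρ : 0 ≤ ρ) :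
    μH[1] (Metric.sphere x R ∩ Metric.ball y ρ) =
      ENNReal.ofReal
        (2 * R * arccos ((R ^ 2 + dist x y ^ 2 - ρ ^ 2) / (2 * dist x y * R))) := by
  obtain ⟨φ, hφ⟩ := exists_linearIsometryEquiv_complex_apply_eq_norm hV (y -ᵥ x)
  let e : P ≃ᵢ ℂ := (IsometryEquiv.vaddConst x).symm.trans φ.toIsometryEquiv
  have hx : e x = 0 := by simp [e]
  have hy : e y = dist x y := by rw [dist_comm, dist_eq_norm_vsub V]; exact hφ
  rw [← hausdorffMeasure_sphere_zero_inter_ball_ofReal hR (dist_pos.2 hxy) hρ, ← hx, ← hy,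
    ← e.image_sphere, ← e.image_ball, ← Set.image_inter e.injective, e.hausdorffMeasure_image]

/-- For `y ∈ ℝ²` with `‖y‖ = r ≥ 1` and `λ > 0` with `r − 1 < λ < r + 1`, the
one-dimensional Hausdorff measure of the set of points on the circle of radius `λ` about the
origin lying strictly within distance `1` of `y` equals `2λ·arccos((λ² + r² − 1)/(2rλ))`. -/
theorem arcLength_within_unit_disk (y : EuclideanSpace ℝ (Fin 2)) (r l : ℝ)
    (hr : 1 ≤ r) (hy : ‖y‖ = r) (hl0 : 0 < l) (hl1 : r - 1 < l) (hl2 : l < r + 1) :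
    μH[1] (Metric.sphere (0 : EuclideanSpace ℝ (Fin 2)) l ∩ Metric.ball y 1) =
      ENNReal.ofReal (2 * l * Real.arccos ((l ^ 2 + r ^ 2 - 1) / (2 * r * l))) := by
  have hy0 : 0 ≠ y := (norm_pos_iff.1 (hy ▸ zero_lt_one.trans_le hr)).symm
  simpa [hy] using arcLength_within_unit_disk_general finrank_euclideanSpace_fin hy0 hl0 zero_le_one
end

section
/- For r ∈ (3,4), define the double integral J(r) = ∫_{r−1}^{3} 2λ₁·arccos((λ₁² + r² − 1)/(2rλ₁)) · ( ∫_{λ₁−1}^{2} ( 2·arccos(λ₂/2) − λ₂·√(1 − λ₂²/4) ) · 2λ₂·arccos((λ₂² + λ₁² − 1)/(2λ₁λ₂)) dλ₂ ) dλ₁. Then J(r)/(4 − r)^{9/2} tends to 32π√2/945 as r tends to 4 from below; that is, J(r) = (32π√2/945)·(4 − r)^{9/2} + O((4 − r)^{5}) as r → 4⁻. -/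
/-!
`J` arises from the area of the lens by two applications of the one-hop operator
`F ↦ ∫ l in (r - 1)..k, arcLength r l * F l`. If `F (k - s) = c * s ^ p * (1 + O(s))` as `s → 0⁺`,
then, because `arccos (1 - y) = √(2 * y) * (1 + O(y))`, the integrand at `r = k + 1 - ε`,
`l = k - s` is `√(8 * k / (k + 1) * (ε - s)) * c * s ^ p` up to a factor `1 + O(ε)` that is uniform
in `0 < s ≤ ε`. Integration yields a Beta function, and each hop raises the exponent by `3 / 2`:
the lens has exponent `3 / 2`, three hops have `3` and four hops have `9 / 2`.
-/

open Real Filter Asymptotics Topology intervalIntegral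

/-- The double integral `J(r)` whose `ρ³` multiple is the expected number of four-hop paths
between two vertices at Euclidean separation `r ∈ [3,4)` in a planar unit disk graph. -/
noncomputable def fourHopIntegral (r : ℝ) : ℝ :=
  ∫ l₁ in (r - 1)..3,
    2 * l₁ * Real.arccos ((l₁ ^ 2 + r ^ 2 - 1) / (2 * r * l₁)) *
      ∫ l₂ in (l₁ - 1)..2,
        (2 * Real.arccos (l₂ / 2) - l₂ * Real.sqrt (1 - l₂ ^ 2 / 4)) *
          (2 * l₂ * Real.arccos ((l₂ ^ 2 + l₁ ^ 2 - 1) / (2 * l₁ * l₂)))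

open MeasureTheory ProbabilityTheory Set

section BetaIntegral

lemma integral_rpow_mul_sub_rpow {p q a : ℝ} (hp : 0 < p) (hq : 0 < q) (ha : 0 < a) :
    ∫ x in 0..a, x ^ (p - 1) * (a - x) ^ (q - 1) = beta p q * a ^ (p + q - 1) := by
  apply Complex.ofReal_injective
  calc ((∫ x in 0..a, x ^ (p - 1) * (a - x) ^ (q - 1) : ℝ) : ℂ)
      = ∫ x in 0..a, (x : ℂ) ^ ((p : ℂ) - 1) * ((a : ℂ) - x) ^ ((q : ℂ) - 1) := by
        rw [← intervalIntegral.integral_ofReal]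
        refine integral_congr fun x hx => ?_
        rw [uIcc_of_le ha.le] at hx
        simp only [Complex.ofReal_mul, Complex.ofReal_cpow hx.1,
          Complex.ofReal_cpow (sub_nonneg.2 hx.2), Complex.ofReal_sub, Complex.ofReal_one]
    _ = (a : ℂ) ^ ((p : ℂ) + q - 1) * Complex.betaIntegral p q :=
        Complex.betaIntegral_scaled p q ha
    _ = ((beta p q * a ^ (p + q - 1) : ℝ) : ℂ) := by
        rw [Complex.betaIntegral_eq_Gamma_mul_div _ _ (by simpa) (by simpa), beta,
          ← Complex.ofReal_add p q]
        simp only [Complex.Gamma_ofReal, Complex.ofReal_mul, Complex.ofReal_div,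
          Complex.ofReal_cpow ha.le, Complex.ofReal_sub, Complex.ofReal_one]
        ring

lemma integral_sqrt_mul_rpow {K c p s : ℝ} (hK : 0 ≤ K) (hp : -1 < p) (hs : 0 < s) :
    ∫ t in 0..s, √(K * (s - t)) * (c * t ^ p) =
      c * √K * beta (p + 1) (3 / 2) * s ^ (p + 3 / 2) := by
  calc ∫ t in 0..s, √(K * (s - t)) * (c * t ^ p)
      = ∫ t in 0..s, c * √K * (t ^ (p + 1 - 1) * (s - t) ^ ((3 / 2 : ℝ) - 1)) := by
        refine integral_congr fun t _ => ?_
        simp only [Real.sqrt_mul hK, Real.sqrt_eq_rpow (s - t)]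
        norm_num
        ring
    _ = c * √K * beta (p + 1) (3 / 2) * s ^ (p + 3 / 2) := by
        rw [intervalIntegral.integral_const_mul,
          integral_rpow_mul_sub_rpow (by linarith) (by norm_num) hs,
          show p + 1 + 3 / 2 - 1 = p + 3 / 2 by ring, ← mul_assoc]

lemma Gamma_three_halves : Gamma (3 / 2) = √π / 2 := by
  have h := Gamma_nat_add_half 1
  norm_num at h ⊢
  exact h

lemma Gamma_four : Gamma 4 = 6 := by
  simp [Nat.factorial]

lemma beta_five_halves_three_halves : beta (5 / 2) (3 / 2) = π / 16 := by
  have h_five_halves : Gamma (5 / 2) = 3 * √π / 4 := by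
    have h := Gamma_nat_add_half 2
    norm_num [Nat.doubleFactorial] at h ⊢
    exact h
  rw [beta, Gamma_three_halves, h_five_halves, show (5 / 2 + 3 / 2 : ℝ) = 4 by norm_num, Gamma_four]
  linear_combination Real.mul_self_sqrt pi_pos.le / 16

lemma beta_four_three_halves : beta 4 (3 / 2) = 32 / 315 := by
  have h_eleven_halves : Gamma (11 / 2) = 945 * √π / 32 := by
    have h := Gamma_nat_add_half 5
    norm_num [Nat.doubleFactorial] at h ⊢
    exact h
  have := Real.sqrt_pos.2 pi_pos
  rw [beta, Gamma_three_halves, Gamma_four, show (4 + 3 / 2 : ℝ) = 11 / 2 by norm_num,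
    h_eleven_halves]
  field_simp
  norm_num

end BetaIntegral

lemma abs_sqrt_sub_sqrt_mul_sqrt_le {x y : ℝ} (hy : 0 ≤ y) : |√x - √y| * √y ≤ |x - y| := by
  rcases le_total 0 x with hx | hx
  · calc |√x - √y| * √y ≤ |√x - √y| * (√x + √y) := by gcongr; simp
      _ = |(√x - √y) * (√x + √y)| := by rw [abs_mul, abs_of_nonneg (a := √x + √y) (by positivity)]
      _ = |x - y| := by
        rw [mul_comm, ← sq_sub_sq, Real.sq_sqrt hx, Real.sq_sqrt hy]
  · rw [Real.sqrt_eq_zero_of_nonpos hx, zero_sub, abs_neg, abs_of_nonneg (Real.sqrt_nonneg y),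
      Real.mul_self_sqrt hy, abs_of_nonpos (by linarith)]
    linarith

lemma tendsto_sub_left_nhdsLT (a : ℝ) : Tendsto (fun x => a - x) (𝓝[<] a) (𝓝[>] 0) := by
  refine tendsto_nhdsWithin_iff.2
    ⟨?_, eventually_mem_nhdsWithin.mono fun x (hx : x < a) => sub_pos.2 hx⟩
  simpa only [sub_self] using ((continuous_sub_left a).tendsto a).mono_left nhdsWithin_le_nhds

lemma isBigO_rpow_rpow_nhdsGT_zero {p q : ℝ} (hqp : q ≤ p) :
    (fun x : ℝ => x ^ p) =O[𝓝[>] 0] fun x => x ^ q := by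
  refine IsBigO.of_bound' ?_
  filter_upwards [Ioc_mem_nhdsGT one_pos] with x hx
  rw [norm_of_nonneg (rpow_nonneg hx.1.le p), norm_of_nonneg (rpow_nonneg hx.1.le q)]
  exact rpow_le_rpow_of_exponent_ge hx.1 hx.2 hqp

lemma measurable_intervalIntegral {α : Type*} [MeasurableSpace α] {f : α → ℝ → ℝ} {a b : α → ℝ}
    (hf : Measurable (Function.uncurry f)) (ha : Measurable a) (hb : Measurable b) :
    Measurable fun x => ∫ y in a x..b x, f x y := by
  have h_Ioc {u v : α → ℝ} (hu : Measurable u) (hv : Measurable v) :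
      Measurable fun x => ∫ y in Ioc (u x) (v x), f x y := by
    have hs : MeasurableSet {z : α × ℝ | z.2 ∈ Ioc (u z.1) (v z.1)} :=
      (measurableSet_lt (hu.comp measurable_fst) measurable_snd).inter
        (measurableSet_le measurable_snd (hv.comp measurable_fst))
    simp_rw [← MeasureTheory.integral_indicator measurableSet_Ioc]
    exact (hf.stronglyMeasurable.indicator hs).integral_prod_right'.measurable
  exact (h_Ioc ha hb).sub (h_Ioc hb ha)

/-- `u = v * (1 + O(φ))` along `l`: the asymptotic equivalence `u ~[l] v` with the relative error
controlled by `φ`. -/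
def IsEquivalentWithRate {α : Type*} (l : Filter α) (φ u v : α → ℝ) : Prop :=
  (fun x => u x - v x) =O[l] fun x => φ x * v x

namespace IsEquivalentWithRate

variable {α β : Type*} {l : Filter α} {φ ψ u v w u₁ u₂ v₁ v₂ : α → ℝ}

lemma congr' (h : IsEquivalentWithRate l φ u₁ v₁) (hu : u₁ =ᶠ[l] u₂) (hv : v₁ =ᶠ[l] v₂) :
    IsEquivalentWithRate l φ u₂ v₂ :=
  IsBigO.congr' h (hu.sub hv) (EventuallyEq.rfl.mul hv)

lemma comp_tendsto {l' : Filter β} {k : β → α} (h : IsEquivalentWithRate l φ u v)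
    (hk : Tendsto k l' l) : IsEquivalentWithRate l' (φ ∘ k) (u ∘ k) (v ∘ k) :=
  IsBigO.comp_tendsto h hk

lemma mono_rate (h : IsEquivalentWithRate l φ u v) (hφ : φ =O[l] ψ) :
    IsEquivalentWithRate l ψ u v :=
  IsBigO.trans h (hφ.mul (isBigO_refl v l))

lemma isBigO (h : IsEquivalentWithRate l φ u v) (hφ : φ =O[l] fun _ => (1 : ℝ)) : u =O[l] v := by
  have h_sub : (fun x => u x - v x) =O[l] v := by
    simpa only [one_mul] using IsBigO.trans h (hφ.mul (isBigO_refl v l))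
  simpa only [sub_add_cancel] using h_sub.add (isBigO_refl v l)

lemma refl (l : Filter α) (φ u : α → ℝ) : IsEquivalentWithRate l φ u u := by
  simpa only [IsEquivalentWithRate, sub_self] using isBigO_zero _ l

lemma trans (huv : IsEquivalentWithRate l φ u v) (hvw : IsEquivalentWithRate l φ v w)
    (hφ : φ =O[l] fun _ => (1 : ℝ)) : IsEquivalentWithRate l φ u w := by
  have h_uv : (fun x => u x - v x) =O[l] fun x => φ x * w x :=
    IsBigO.trans huv ((isBigO_refl φ l).mul (hvw.isBigO hφ))
  simpa only [IsEquivalentWithRate, sub_add_sub_cancel] using h_uv.add hvw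

lemma mul (h₁ : IsEquivalentWithRate l φ u₁ v₁) (h₂ : IsEquivalentWithRate l φ u₂ v₂)
    (hφ : φ =O[l] fun _ => (1 : ℝ)) :
    IsEquivalentWithRate l φ (fun x => u₁ x * u₂ x) (fun x => v₁ x * v₂ x) := by
  have h_left : (fun x => (u₁ x - v₁ x) * u₂ x) =O[l] fun x => φ x * v₁ x * v₂ x :=
    IsBigO.mul h₁ (h₂.isBigO hφ)
  have h_right : (fun x => v₁ x * (u₂ x - v₂ x)) =O[l] fun x => v₁ x * (φ x * v₂ x) :=
    (isBigO_refl v₁ l).mul h₂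
  have h_right' : (fun x => v₁ x * (u₂ x - v₂ x)) =O[l] fun x => φ x * v₁ x * v₂ x :=
    h_right.congr_right fun x => by ring
  exact (h_left.add h_right').congr (fun x => by ring) fun x => by ring

lemma sqrt (h : IsEquivalentWithRate l φ u v) (hv : ∀ᶠ x in l, 0 ≤ v x) :
    IsEquivalentWithRate l φ (fun x => √(u x)) (fun x => √(v x)) := by
  obtain ⟨C, hC⟩ := IsBigO.bound h
  refine IsBigO.of_bound C ?_
  filter_upwards [hC, hv] with x hx hvx
  rcases hvx.eq_or_lt with hv₀ | hv₀
  · have hu₀ : u x = 0 := by simpa [← hv₀] using hx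
    simp [hu₀, ← hv₀]
  · refine le_of_mul_le_mul_right ?_ (Real.sqrt_pos.2 hv₀)
    calc ‖√(u x) - √(v x)‖ * √(v x) ≤ ‖u x - v x‖ := abs_sqrt_sub_sqrt_mul_sqrt_le hvx
      _ ≤ C * ‖φ x * v x‖ := hx
      _ = C * ‖φ x * √(v x)‖ * √(v x) := by
        rw [norm_mul, norm_mul, norm_of_nonneg hvx, norm_of_nonneg (Real.sqrt_nonneg _)]
        linear_combination -C * ‖φ x‖ * Real.mul_self_sqrt hvx

lemma isEquivalent (h : IsEquivalentWithRate l φ u v) (hφ : Tendsto φ l (𝓝 0)) : u ~[l] v := by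
  have h_little : (fun x => φ x * v x) =o[l] fun x => 1 * v x :=
    ((isLittleO_one_iff ℝ).2 hφ).mul_isBigO (isBigO_refl v l)
  exact (IsBigO.trans_isLittleO h h_little).congr_right fun x => one_mul (v x)

lemma tendsto_div {c : ℝ} (h : IsEquivalentWithRate l φ u fun x => c * w x)
    (hφ : Tendsto φ l (𝓝 0)) (hw : ∀ᶠ x in l, w x ≠ 0) :
    Tendsto (fun x => u x / w x) l (𝓝 c) := by
  refine ((h.isEquivalent hφ).div (IsEquivalent.refl (u := w))).congr_right ?_ |>.tendsto_const
  filter_upwards [hw] with x hx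
  exact mul_div_cancel_right₀ c hx

end IsEquivalentWithRate

/-- The germ at the origin of the sector `0 < t ≤ s` of the `(s, t)`-plane. Asymptotics along it are
asymptotics as `s → 0⁺` that are uniform in `t ∈ (0, s]`. -/
def sector : Filter (ℝ × ℝ) :=
  comap Prod.fst (𝓝 0) ⊓ 𝓟 {z | z.2 ∈ Ioc 0 z.1}

section Sector

lemma eventually_sector_iff {P : ℝ × ℝ → Prop} :
    (∀ᶠ z in sector, P z) ↔ ∀ᶠ s in 𝓝 0, ∀ t ∈ Ioc 0 s, P (s, t) := by
  rw [sector, eventually_inf_principal, eventually_comap]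
  refine eventually_congr (.of_forall fun s => ⟨fun h t ht => h (s, t) rfl ht, ?_⟩)
  rintro h ⟨_, t⟩ rfl ht
  exact h t ht

lemma eventually_mem_sector : ∀ᶠ z in sector, z.2 ∈ Ioc 0 z.1 :=
  eventually_sector_iff.2 (Eventually.of_forall fun _ _ ht => ht)

lemma tendsto_fst_sector : Tendsto Prod.fst sector (𝓝[>] 0) :=
  tendsto_nhdsWithin_iff.2 ⟨tendsto_comap.mono_left inf_le_left,
    eventually_mem_sector.mono fun _ hz => hz.1.trans_le hz.2⟩

lemma tendsto_snd_sector : Tendsto Prod.snd sector (𝓝[>] 0) :=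
  tendsto_nhdsWithin_iff.2
    ⟨squeeze_zero' (eventually_mem_sector.mono fun _ hz => hz.1.le)
      (eventually_mem_sector.mono fun _ hz => hz.2)
      (tendsto_fst_sector.mono_right nhdsWithin_le_nhds),
    eventually_mem_sector.mono fun _ hz => hz.1⟩

lemma sector_le_nhds : sector ≤ 𝓝 0 := by
  rw [← Prod.mk_zero_zero, nhds_prod_eq]
  exact (tendsto_fst_sector.mono_right nhdsWithin_le_nhds).prodMk
    (tendsto_snd_sector.mono_right nhdsWithin_le_nhds)

lemma eventually_fst_lt_sector {δ : ℝ} (hδ : 0 < δ) : ∀ᶠ z in sector, z.1 < δ :=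
  (tendsto_fst_sector.mono_right nhdsWithin_le_nhds).eventually_lt_const hδ

lemma isBigO_snd_fst_sector : (Prod.snd : ℝ × ℝ → ℝ) =O[sector] Prod.fst := by
  refine IsBigO.of_bound' (eventually_mem_sector.mono fun z hz => ?_)
  rw [norm_of_nonneg hz.1.le, norm_of_nonneg (hz.1.le.trans hz.2)]
  exact hz.2

lemma isBigO_id_fst_sector : (id : ℝ × ℝ → ℝ × ℝ) =O[sector] Prod.fst :=
  (isBigO_refl _ _).prod_left isBigO_snd_fst_sector

lemma isBigO_fst_one_sector : (Prod.fst : ℝ × ℝ → ℝ) =O[sector] fun _ => (1 : ℝ) :=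
  (tendsto_fst_sector.mono_right nhdsWithin_le_nhds).isBigO_one ℝ

end Sector

namespace IsEquivalentWithRate

lemma sector_of_differentiableAt {f : ℝ × ℝ → ℝ} (hf : DifferentiableAt ℝ f 0) (h₀ : f 0 ≠ 0) :
    IsEquivalentWithRate sector Prod.fst f fun _ => f 0 := by
  have h_sub : (fun z => f z - f 0) =O[sector] fun z : ℝ × ℝ => z - 0 :=
    hf.isBigO_sub.mono sector_le_nhds
  have h_fst : (fun z : ℝ × ℝ => z - 0) =O[sector] Prod.fst :=
    isBigO_id_fst_sector.congr_left fun z => (sub_zero z).symm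
  simpa only [mul_one] using!
    (h_sub.trans h_fst).mul (isBigO_const_const (1 : ℝ) h₀ sector)

lemma intervalIntegral {f g : ℝ → ℝ → ℝ}
    (h : IsEquivalentWithRate sector Prod.fst (Function.uncurry f) (Function.uncurry g))
    (hf : ∀ s, Measurable (f s)) (hg : ∀ s, IntervalIntegrable (g s) volume 0 s)
    (hg_nonneg : ∀ s, ∀ t ∈ Ioc 0 s, 0 ≤ g s t) :
    IsEquivalentWithRate (𝓝[>] 0) id (fun s => ∫ t in 0..s, f s t)
      (fun s => ∫ t in 0..s, g s t) := by
  obtain ⟨C, hC⟩ := IsBigO.bound h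
  refine IsBigO.of_bound C ?_
  filter_upwards [nhdsWithin_le_nhds (eventually_sector_iff.1 hC), self_mem_nhdsWithin]
    with s h_bound (hs : 0 < s)
  have h_diff : ∀ t ∈ Ioc 0 s, ‖f s t - g s t‖ ≤ C * s * g s t := fun t ht => by
    simpa [abs_of_pos hs, abs_of_nonneg (hg_nonneg s t ht), mul_assoc] using h_bound t ht
  have h_diff_integrable : IntervalIntegrable (fun t => f s t - g s t) volume 0 s := by
    refine ((hg s).const_mul (C * s)).mono_fun'
      ((hf s).aestronglyMeasurable.sub (hg s).def'.aestronglyMeasurable) ?_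
    rw [uIoc_of_le hs.le]
    exact (ae_restrict_iff' measurableSet_Ioc).2 (.of_forall h_diff)
  have h_f : IntervalIntegrable (f s) volume 0 s := by
    simpa only [sub_add_cancel] using h_diff_integrable.add (hg s)
  have h_g : 0 ≤ ∫ t in 0..s, g s t := by
    rw [integral_of_le hs.le]
    exact setIntegral_nonneg measurableSet_Ioc (hg_nonneg s)
  calc ‖(∫ t in 0..s, f s t) - ∫ t in 0..s, g s t‖
      = ‖∫ t in 0..s, (f s t - g s t)‖ := by rw [integral_sub h_f (hg s)]
    _ ≤ ∫ t in 0..s, C * s * g s t :=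
        norm_integral_le_of_norm_le hs.le (.of_forall h_diff) ((hg s).const_mul _)
    _ = C * ‖id s * ∫ t in 0..s, g s t‖ := by
        rw [intervalIntegral.integral_const_mul, id, norm_of_nonneg (mul_nonneg hs.le h_g),
          mul_assoc]

end IsEquivalentWithRate

section Trigonometry

lemma abs_arccos_one_sub_sub_sqrt_le {y : ℝ} (hy₀ : 0 ≤ y) (hy₂ : y ≤ 2) :
    |arccos (1 - y) - √(2 * y)| ≤ y * √(2 * y) := by
  set x := arccos (1 - y) / 2 with hx
  have hx₀ : 0 ≤ x := div_nonneg (arccos_nonneg _) zero_le_two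
  have hx_pi : x ≤ π / 2 := div_le_div_of_nonneg_right (arccos_le_pi _) zero_le_two
  have h_sin : sin x = √(y / 2) := by
    rw [sin_half_eq_sqrt (arccos_nonneg _) (by linarith [arccos_le_pi (1 - y), pi_pos]),
      cos_arccos (by linarith) (by linarith), sub_sub_cancel]
  have h_sqrt : √(2 * y) = 2 * sin x := by
    rw [h_sin, show 2 * y = 2 ^ 2 * (y / 2) by ring, Real.sqrt_mul (by norm_num),
      Real.sqrt_sq zero_le_two]
  have h_y : y = 2 * sin x ^ 2 := by
    rw [h_sin, Real.sq_sqrt (by linarith)]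
    ring
  have h_jordan : x ≤ 2 * sin x := by
    have h := mul_le_sin hx₀ hx_pi
    rw [div_mul_eq_mul_div, div_le_iff₀ pi_pos] at h
    nlinarith [pi_le_four, sin_nonneg_of_nonneg_of_le_pi hx₀ (by linarith [pi_pos])]
  have h_cube : x ^ 3 ≤ (2 * sin x) ^ 3 := by gcongr
  have h_sin_nonneg : 0 ≤ sin x := by linarith
  rw [show arccos (1 - y) = 2 * x by rw [hx]; ring, h_sqrt,
    abs_of_nonneg (by linarith [sin_le hx₀])]
  calc 2 * x - 2 * sin x ≤ (2 * sin x) ^ 3 / 3 := by linarith [sin_ge_sub_cube hx₀]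
    _ ≤ 2 * sin x ^ 2 * (2 * sin x) := by linarith [pow_nonneg h_sin_nonneg 3]
    _ = y * (2 * sin x) := by rw [← h_y]

lemma isEquivalentWithRate_arccos_one_sub :
    IsEquivalentWithRate (𝓝[≥] 0) id (fun y => arccos (1 - y)) (fun y => √(2 * y)) := by
  refine IsBigO.of_bound' ?_
  filter_upwards [Icc_mem_nhdsGE zero_lt_two] with y hy
  rw [id, norm_of_nonneg (mul_nonneg hy.1 (Real.sqrt_nonneg _))]
  exact abs_arccos_one_sub_sub_sqrt_le hy.1 hy.2

end Trigonometry

/-- Area of the intersection of two unit disks whose centres are at distance `d ≤ 2`. -/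
noncomputable def lensArea (d : ℝ) : ℝ :=
  2 * arccos (d / 2) - d * √(1 - d ^ 2 / 4)

section LensArea

lemma continuous_lensArea : Continuous lensArea := by
  unfold lensArea
  fun_prop

lemma hasDerivAt_lensArea {d : ℝ} (h_neg_two : -2 < d) (h_two : d < 2) :
    HasDerivAt lensArea (-√(4 - d ^ 2)) d := by
  have h_pos : 0 < 1 - d ^ 2 / 4 := by nlinarith
  have h_arccos : HasDerivAt (fun x => arccos (x / 2)) (-(1 / √(1 - d ^ 2 / 4)) * (1 / 2)) d := by
    rw [show d ^ 2 / 4 = (d / 2) ^ 2 by ring]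
    exact (hasDerivAt_arccos (by linarith) (by linarith)).comp d ((hasDerivAt_id d).div_const 2)
  have h_sqrt :
      HasDerivAt (fun x => √(1 - x ^ 2 / 4)) (-(2 * d / 4) / (2 * √(1 - d ^ 2 / 4))) d := by
    simpa using (((hasDerivAt_pow 2 d).div_const 4).const_sub 1).sqrt h_pos.ne'
  have h_chord : √(4 - d ^ 2) = 2 * √(1 - d ^ 2 / 4) := by
    rw [show 4 - d ^ 2 = 2 ^ 2 * (1 - d ^ 2 / 4) by ring, Real.sqrt_mul (by norm_num),
      Real.sqrt_sq zero_le_two]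
  refine ((h_arccos.const_mul 2).sub ((hasDerivAt_id d).mul h_sqrt)).congr_deriv ?_
  have h_ne := (Real.sqrt_pos.2 h_pos).ne'
  have h_sq := Real.sq_sqrt h_pos.le
  rw [h_chord, id]
  generalize √(1 - d ^ 2 / 4) = w at h_ne h_sq ⊢
  field_simp
  linear_combination 4 * h_sq

lemma lensArea_two_sub {t : ℝ} (h_zero : 0 ≤ t) (h_four : t ≤ 4) :
    lensArea (2 - t) = ∫ x in 0..t, √(4 * x - x ^ 2) := by
  have h_lens : lensArea 2 = 0 := by norm_num [lensArea]
  have h_deriv : ∀ x ∈ Ioo 0 t, HasDerivAt (fun x => lensArea (2 - x)) √(4 * x - x ^ 2) x := by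
    intro x hx
    have h := hasDerivAt_lensArea (d := 2 - x) (by linarith [hx.2]) (by linarith [hx.1])
    refine (h.comp_const_sub 2 x).congr_deriv ?_
    rw [neg_neg]
    ring_nf
  rw [integral_eq_sub_of_hasDerivAt_of_le h_zero
    (continuous_lensArea.comp' (continuous_sub_left 2)).continuousOn h_deriv
    (Continuous.intervalIntegrable (by fun_prop) _ _), sub_zero, h_lens, sub_zero]

lemma isEquivalentWithRate_lensArea :
    IsEquivalentWithRate (𝓝[>] 0) id (fun t => lensArea (2 - t))
      fun t => 4 / 3 * t ^ (3 / 2 : ℝ) := by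
  have h_radicand : IsEquivalentWithRate (𝓝[>] 0) id (fun x => 4 * x - x ^ 2)
      fun x => 4 * x := by
    have h_sq : (fun x : ℝ => x ^ 2) =O[𝓝[>] 0] fun x => 4 * x ^ 2 :=
      (isBigO_refl _ _).const_mul_right four_ne_zero
    exact h_sq.neg_left.congr (fun x => by ring) fun x => by rw [id]; ring
  have h_chord := h_radicand.sqrt
    (eventually_mem_nhdsWithin.mono fun x (hx : 0 < x) => by positivity)
  have h_sector := (h_chord.comp_tendsto tendsto_snd_sector).mono_rate isBigO_snd_fst_sector
  refine (h_sector.intervalIntegral (f := fun _ x => √(4 * x - x ^ 2)) (g := fun _ x => √(4 * x))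
    (fun _ => by fun_prop) (fun s => Continuous.intervalIntegrable (by fun_prop) _ _)
    fun _ _ _ => Real.sqrt_nonneg _).congr' ?_ ?_
  · filter_upwards [Ioc_mem_nhdsGT four_pos] with t ht
    exact (lensArea_two_sub ht.1.le ht.2).symm
  · refine .of_forall fun t => ?_
    calc ∫ x in 0..t, √(4 * x) = ∫ x in 0..t, 2 * x ^ (1 / 2 : ℝ) := by
          refine integral_congr fun x _ => ?_
          simp only [← Real.sqrt_eq_rpow]
          rw [Real.sqrt_mul (by norm_num), show (4 : ℝ) = 2 ^ 2 by norm_num,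
            Real.sqrt_sq zero_le_two]
      _ = 4 / 3 * t ^ (3 / 2 : ℝ) := by
          rw [intervalIntegral.integral_const_mul, integral_rpow (by norm_num)]
          norm_num
          ring

end LensArea

/-- Length of the arc of radius `l` about one point lying within unit distance of a second point at
distance `a`. -/
noncomputable def arcLength (a l : ℝ) : ℝ :=
  2 * l * arccos ((l ^ 2 + a ^ 2 - 1) / (2 * a * l))

section ArcLength

lemma measurable_arcLength : Measurable (Function.uncurry arcLength) := by
  unfold arcLength Function.uncurry
  fun_prop

lemma arcLength_eq_arccos_one_sub {a l d : ℝ} (ha : a ≠ 0) (hl : l ≠ 0) (hd : l + 1 - a = d) :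
    arcLength a l = 2 * l * arccos (1 - (2 - d) / (2 * a * l) * d) := by
  rw [arcLength, ← hd]
  congr 2
  field_simp
  ring

lemma two_mul_mul_sqrt_eq_sqrt {a l : ℝ} (ha : a ≠ 0) (hl : 0 < l) (d : ℝ) :
    2 * l * √(2 * ((2 - d) / (2 * a * l) * d)) = √(4 * (l / a) * (2 - d) * d) := by
  nth_rw 1 [← Real.sqrt_sq (by positivity : 0 ≤ 2 * l)]
  rw [← Real.sqrt_mul (by positivity)]
  congr 1
  field_simp
  ring

lemma isEquivalentWithRate_arcLength_sqrt {k : ℝ} (hk : 0 < k) :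
    IsEquivalentWithRate sector Prod.fst (fun z => arcLength (k + 1 - z.1) (k - z.2))
      fun z => √(4 * ((k - z.2) / (k + 1 - z.1)) * (2 - (z.1 - z.2)) * (z.1 - z.2)) := by
  set q : ℝ × ℝ → ℝ := fun z => (2 - (z.1 - z.2)) / (2 * (k + 1 - z.1) * (k - z.2)) with hq
  have h_q_tendsto : Tendsto q sector (𝓝 (q 0)) := by
    refine Tendsto.mono_left (ContinuousAt.div (by fun_prop) (by fun_prop) ?_) sector_le_nhds
    simp only [Prod.fst_zero, Prod.snd_zero, sub_zero]
    positivity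
  have h_q_pos : 0 < q 0 := by
    simp only [hq, Prod.fst_zero, Prod.snd_zero, sub_zero]
    positivity
  have h_rate : (fun z => q z * (z.1 - z.2)) =O[sector] Prod.fst := by
    simpa only [one_mul] using
      (h_q_tendsto.isBigO_one ℝ).mul ((isBigO_refl Prod.fst sector).sub isBigO_snd_fst_sector)
  have h_nonneg : ∀ᶠ z in sector, 0 ≤ q z * (z.1 - z.2) := by
    filter_upwards [h_q_tendsto.eventually_const_lt h_q_pos, eventually_mem_sector] with z hz hz'
    exact mul_nonneg hz.le (sub_nonneg.2 hz'.2)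
  have h_tendsto : Tendsto (fun z => q z * (z.1 - z.2)) sector (𝓝[≥] 0) :=
    tendsto_nhdsWithin_iff.2
      ⟨h_rate.trans_tendsto (tendsto_fst_sector.mono_right nhdsWithin_le_nhds), h_nonneg⟩
  have h_arccos :=
    (isEquivalentWithRate_arccos_one_sub.comp_tendsto h_tendsto).mono_rate h_rate
  have h_pos : ∀ᶠ z in sector, 0 < k - z.2 ∧ 0 < k + 1 - z.1 := by
    filter_upwards [eventually_fst_lt_sector hk, eventually_mem_sector] with z hz hz'
    constructor <;> linarith [hz'.2]
  refine ((IsEquivalentWithRate.refl _ _ fun z => 2 * (k - z.2)).mul h_arccos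
    isBigO_fst_one_sector).congr' ?_ ?_
  · filter_upwards [h_pos] with z ⟨hl, ha⟩
    exact (arcLength_eq_arccos_one_sub ha.ne' hl.ne' (by ring)).symm
  · filter_upwards [h_pos] with z ⟨hl, ha⟩
    exact two_mul_mul_sqrt_eq_sqrt ha.ne' hl _

lemma isEquivalentWithRate_arcLength {k : ℝ} (hk : 0 < k) :
    IsEquivalentWithRate sector Prod.fst (fun z => arcLength (k + 1 - z.1) (k - z.2))
      fun z => √(8 * k / (k + 1) * (z.1 - z.2)) := by
  set f : ℝ × ℝ → ℝ := fun z => 4 * ((k - z.2) / (k + 1 - z.1)) * (2 - (z.1 - z.2)) with hf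
  have hf₀ : f 0 = 8 * k / (k + 1) := by
    simp only [hf, Prod.fst_zero, Prod.snd_zero, sub_zero]
    ring
  have hf_diff : DifferentiableAt ℝ f 0 := by
    have h_ne : k + 1 - (0 : ℝ × ℝ).1 ≠ 0 := by
      simp only [Prod.fst_zero, sub_zero]
      positivity
    fun_prop (disch := exact h_ne)
  have h_coeff : IsEquivalentWithRate sector Prod.fst f fun _ => 8 * k / (k + 1) := by
    rw [← hf₀]
    exact .sector_of_differentiableAt hf_diff (by rw [hf₀]; positivity)
  have h_radicand := h_coeff.mul (.refl _ _ fun z => z.1 - z.2) isBigO_fst_one_sector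
  refine (isEquivalentWithRate_arcLength_sqrt hk).trans (h_radicand.sqrt ?_) isBigO_fst_one_sector
  filter_upwards [eventually_mem_sector] with z hz
  exact mul_nonneg (by positivity) (sub_nonneg.2 hz.2)

end ArcLength

/-- The one-hop operator: if `F l` is the expected number of paths between vertices at separation
`l`, where `F` is supported in `[0, k]`, this is the expected number of paths with one more hop
at separation `r ≥ k`, per unit density. -/
noncomputable def hopIntegral (F : ℝ → ℝ) (k r : ℝ) : ℝ :=
  ∫ l in (r - 1)..k, arcLength r l * F l

section HopIntegral

lemma measurable_hopIntegral {F : ℝ → ℝ} (hF : Measurable F) (k : ℝ) :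
    Measurable (hopIntegral F k) :=
  measurable_intervalIntegral (measurable_arcLength.mul (hF.comp measurable_snd))
    (measurable_id.sub_const 1) measurable_const

lemma hopIntegral_add_one_sub (F : ℝ → ℝ) (k s : ℝ) :
    hopIntegral F k (k + 1 - s) = ∫ t in 0..s, arcLength (k + 1 - s) (k - t) * F (k - t) := by
  rw [integral_comp_sub_left (fun l => arcLength (k + 1 - s) l * F l), sub_zero, hopIntegral,
    add_sub_right_comm, add_sub_cancel_right]

lemma isEquivalentWithRate_hopIntegral {F : ℝ → ℝ} {k c p : ℝ} (hF : Measurable F) (hk : 0 < k)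
    (hc : 0 ≤ c) (hp : -1 < p)
    (h : IsEquivalentWithRate (𝓝[>] 0) id (fun s => F (k - s)) fun s => c * s ^ p) :
    IsEquivalentWithRate (𝓝[>] 0) id (fun s => hopIntegral F k (k + 1 - s))
      fun s => c * √(8 * k / (k + 1)) * beta (p + 1) (3 / 2) * s ^ (p + 3 / 2) := by
  have h_snd : IsEquivalentWithRate sector Prod.fst (fun z => F (k - z.2)) fun z => c * z.2 ^ p :=
    (h.comp_tendsto tendsto_snd_sector).mono_rate isBigO_snd_fst_sector
  have h_integrand := (isEquivalentWithRate_arcLength hk).mul h_snd isBigO_fst_one_sector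
  refine (h_integrand.intervalIntegral
    (f := fun s t => arcLength (k + 1 - s) (k - t) * F (k - t))
    (g := fun s t => √(8 * k / (k + 1) * (s - t)) * (c * t ^ p)) (fun s => ?_) (fun s => ?_)
    (fun s t ht => ?_)).congr' (.of_forall fun s => (hopIntegral_add_one_sub F k s).symm) ?_
  · exact (measurable_arcLength.comp (by fun_prop : Measurable fun t => (k + 1 - s, k - t))).mul
      (hF.comp (measurable_id.const_sub k))
  · exact ((intervalIntegrable_rpow' hp).const_mul c).continuousOn_mul (by fun_prop)
  · have := rpow_nonneg ht.1.le p
    positivity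
  · filter_upwards [self_mem_nhdsWithin] with s hs
    exact integral_sqrt_mul_rpow (by positivity) hp hs

end HopIntegral

section FourHops

lemma isEquivalentWithRate_hopIntegral_lensArea :
    IsEquivalentWithRate (𝓝[>] 0) id (fun s => hopIntegral lensArea 2 (3 - s))
      fun s => π / 12 * √(16 / 3) * s ^ (3 : ℝ) := by
  have h := isEquivalentWithRate_hopIntegral continuous_lensArea.measurable two_pos (by norm_num)
    (by norm_num) isEquivalentWithRate_lensArea
  refine h.congr' (.of_forall fun s => by norm_num) (.of_forall fun s => ?_)
  rw [show (3 / 2 + 1 : ℝ) = 5 / 2 by norm_num, beta_five_halves_three_halves]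
  ring_nf

lemma fourHopIntegral_eq_hopIntegral (r : ℝ) :
    fourHopIntegral r = hopIntegral (hopIntegral lensArea 2) 3 r := by
  simp only [fourHopIntegral, hopIntegral, arcLength, lensArea, mul_comm]

lemma isEquivalentWithRate_fourHopIntegral :
    IsEquivalentWithRate (𝓝[>] 0) id (fun ε => fourHopIntegral (4 - ε))
      fun ε => 32 * π * √2 / 945 * ε ^ (9 / 2 : ℝ) := by
  have h_const : π / 12 * √(16 / 3) * √6 * (32 / 315) = 32 * π * √2 / 945 := by
    have h : √(16 / 3) * √6 = 4 * √2 := by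
      rw [← Real.sqrt_mul (by norm_num), show (16 / 3 * 6 : ℝ) = 4 ^ 2 * 2 by norm_num,
        Real.sqrt_mul (by norm_num), Real.sqrt_sq (by norm_num)]
    linear_combination π / 12 * (32 / 315) * h
  have h := isEquivalentWithRate_hopIntegral (k := 3)
    (measurable_hopIntegral continuous_lensArea.measurable 2) (by norm_num) (by positivity)
    (by norm_num) isEquivalentWithRate_hopIntegral_lensArea
  refine h.congr' (.of_forall fun ε => ?_) (.of_forall fun ε => ?_)
  · norm_num [fourHopIntegral_eq_hopIntegral]
  · rw [← h_const, ← beta_four_three_halves]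
    norm_num

end FourHops

/-- `J(r)/(4 − r)^{9/2} → 32π√2/945` as `r → 4⁻`; that is,
`J(r) = (32π√2/945)·(4 − r)^{9/2} + O((4 − r)⁵)` as `r → 4⁻`. -/
theorem fourHopIntegral_asymptotics :
    Tendsto (fun r : ℝ => fourHopIntegral r / (4 - r) ^ ((9 : ℝ) / 2)) (𝓝[<] 4)
      (𝓝 (32 * π * Real.sqrt 2 / 945)) ∧
    (fun r : ℝ => fourHopIntegral r - 32 * π * Real.sqrt 2 / 945 * (4 - r) ^ ((9 : ℝ) / 2))
      =O[𝓝[<] 4] (fun r : ℝ => (4 - r) ^ 5) := by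
  have h_lim : Tendsto (fun r : ℝ => 4 - r) (𝓝[<] 4) (𝓝[>] 0) := tendsto_sub_left_nhdsLT 4
  have h_pos : ∀ᶠ r : ℝ in 𝓝[<] 4, 0 < 4 - r := h_lim.eventually self_mem_nhdsWithin
  have h : IsEquivalentWithRate (𝓝[<] 4) (fun r => 4 - r) fourHopIntegral
      fun r => 32 * π * √2 / 945 * (4 - r) ^ ((9 : ℝ) / 2) := by
    simpa only [Function.comp_def, id, sub_sub_cancel] using!
      isEquivalentWithRate_fourHopIntegral.comp_tendsto h_lim
  have h_pow : (fun r : ℝ => (4 - r) ^ ((9 : ℝ) / 2)) =O[𝓝[<] 4] fun r => (4 - r) ^ (4 : ℝ) :=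
    (isBigO_rpow_rpow_nhdsGT_zero (by norm_num)).comp_tendsto h_lim
  have h_error := (isBigO_refl (fun r : ℝ => 4 - r) (𝓝[<] 4)).mul
    (h_pow.const_mul_left (32 * π * √2 / 945))
  refine ⟨h.tendsto_div (h_lim.mono_right nhdsWithin_le_nhds)
    (h_pos.mono fun r hr => (rpow_pos_of_pos hr _).ne'),
    (IsBigO.trans h h_error).congr_right fun r => ?_⟩
  norm_cast
  ring
end
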